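/- arXiv:2204.13008 — 9 statements merged into one kernel-verified Lean document; each statement's English description precedes it below -/
import Mathlib

section
/- There exists a multiunitary complex matrix of size 36: a matrix U : (Fin 6 × Fin 6) → (Fin 6 × Fin 6) → ℂ such that U, its reshuffle U^R, and its partial transpose U^Γ are all unitary. (This is equivalent to the existence of an absolutely maximally entangled state of four subsystems with six levels each.) -/
/-!
Take an array `f : ℤ/6 × ℤ/6 → ℂ` and put `U (k,l) (m,n) = f (k - l, k - m)` if `k - l = m - n`,
and `0` otherwise; such matrices are diagonal in the Bell basis of `ℂ⁶ ⊗ ℂ⁶`. The reshuffle and the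
partial transpose of `U` are again supported on one entry `n` for each row `(k,l)` and each `m`:

* `U^R (k,l) (m,n) = f (k - m, k - l)` if `n = m - k + l`,
* `U^Γ (k,l) (m,n) = f (m - l, k - m)` if `n = k + l - m`.

Each of the three unitarity conditions therefore becomes a family of quadratic equations with six
summands in the entries of `f` (`unitary_of_support`). They have a solution in `(1/6) ℤ[ω]`, where
`ω` is a primitive cube root of unity: the table `arr`. With Eisenstein integers `a + b ω` stored
as integer pairs, the equations are decided by evaluation.
-/

open Matrix

/-- The reshuffle of a matrix indexed by pairs: `U^R (k,l) (m,n) = U (k,m) (l,n)`. -/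
def reshuffle {N : ℕ} (U : Matrix (Fin N × Fin N) (Fin N × Fin N) ℂ) :
    Matrix (Fin N × Fin N) (Fin N × Fin N) ℂ :=
  Matrix.of fun p q => U (p.1, q.1) (p.2, q.2)

/-- The partial transpose of a matrix indexed by pairs: `U^Γ (k,l) (m,n) = U (k,n) (m,l)`. -/
def partialTranspose {N : ℕ} (U : Matrix (Fin N × Fin N) (Fin N × Fin N) ℂ) :
    Matrix (Fin N × Fin N) (Fin N × Fin N) ℂ :=
  Matrix.of fun p q => U (p.1, q.2) (q.1, p.2)

/-- The array `6 f`, whose entries `(a, b)` stand for the Eisenstein integers `a + b ω`. Row `d` is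
the discrete Fourier transform over `ℤ/6` of six cube roots of unity, the eigenvalues of `U`; they
have the exponents `200101`, `110211`, `011212`, `110211`, `200101`, `221022` for `d = 0, …, 5`. -/
def arr : Fin 6 → Fin 6 → ℤ × ℤ :=
  ![![(2, 1), (0, 0), (-1, 1), (0, -3), (-4, -2), (-3, -3)],
    ![(0, 3), (2, 4), (-3, -3), (2, 1), (0, 0), (-1, 1)],
    ![(-1, 1), (0, 0), (-1, -2), (3, 3), (2, -2), (3, 0)],
    ![(0, 3), (2, 4), (-3, -3), (2, 1), (0, 0), (-1, 1)],
    ![(2, 1), (0, 0), (-1, 1), (0, -3), (-4, -2), (-3, -3)],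
    ![(-3, -3), (-4, -2), (3, 0), (-1, 1), (0, 0), (-1, -2)]]

/-- The product `x * conj y` of the Eisenstein integers represented by `x` and `y`. -/
def mulConj (x y : ℤ × ℤ) : ℤ × ℤ :=
  (x.1 * y.1 + x.2 * y.2 - x.1 * y.2, x.2 * y.1 - x.1 * y.2)

/-- The primitive cube root of unity `exp (2πi/3)`. -/
noncomputable def omega : ℂ := ⟨-1 / 2, √3 / 2⟩

/-- The complex number `(a + b ω) / 6` for `x = (a, b)`. -/
noncomputable def toC (x : ℤ × ℤ) : ℂ := (x.1 + x.2 * omega) / 6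

lemma toC_mul_star (x y : ℤ × ℤ) :
    toC x * star (toC y) = ((mulConj x y).1 + (mulConj x y).2 * omega) / 36 := by
  have h3 : √3 * √3 = 3 := Real.mul_self_sqrt (by norm_num)
  have hs : star omega = -1 - omega := by
    apply Complex.ext <;> simp [omega]; ring
  have hq : omega * omega = -1 - omega := by
    apply Complex.ext <;> simp [omega] <;> linarith
  have hy : star (toC y) = (y.1 + y.2 * (-1 - omega)) / 6 := by
    rw [← hs]
    simp [toC]
  rw [hy]
  simp only [toC, mulConj]
  push_cast
  linear_combination (-(x.2 * y.2 : ℂ) / 36) * hq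

/-- Orthonormality of the rows of a matrix whose row `p` has, for each `m`, the single entry
`F p m / 6` in column `(m, σ p m)`, expressed through integer pairs. The sum over `m` is written as
a fold over a list, which evaluates cheaply. -/
def Orthonormal6 (σ : Fin 6 × Fin 6 → Fin 6 → Fin 6) (F : Fin 6 × Fin 6 → Fin 6 → ℤ × ℤ) : Prop :=
  ∀ k l k' l' : Fin 6,
    (List.finRange 6).foldr
      (fun m s => if σ (k, l) m = σ (k', l') m then mulConj (F (k, l) m) (F (k', l') m) + s else s)
      0 = if k = k' ∧ l = l' then (36, 0) else 0

instance (σ : Fin 6 × Fin 6 → Fin 6 → Fin 6) (F : Fin 6 × Fin 6 → Fin 6 → ℤ × ℤ) :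
    Decidable (Orthonormal6 σ F) := by
  unfold Orthonormal6
  infer_instance

lemma unitary_of_support (σ : Fin 6 × Fin 6 → Fin 6 → Fin 6) (F : Fin 6 × Fin 6 → Fin 6 → ℤ × ℤ)
    (h : Orthonormal6 σ F) (M : Matrix (Fin 6 × Fin 6) (Fin 6 × Fin 6) ℂ)
    (hM : ∀ p m n, M p (m, n) = if n = σ p m then toC (F p m) else 0) :
    M * Mᴴ = 1 := by
  ext ⟨k, l⟩ ⟨k', l'⟩
  have hkl := h k l k' l'
  have hfold : ∀ L : List (Fin 6), L.foldr
      (fun m s => if σ (k, l) m = σ (k', l') m then mulConj (F (k, l) m) (F (k', l') m) + s else s)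
      0 = (L.map fun m => if σ (k, l) m = σ (k', l') m then
        mulConj (F (k, l) m) (F (k', l') m) else 0).sum := by
    intro L
    induction L with
    | nil => rfl
    | cons a L ih =>
      rw [List.foldr_cons, List.map_cons, List.sum_cons, ih]
      split_ifs <;> simp
  rw [hfold, ← List.ofFn_eq_map, List.sum_ofFn] at hkl
  have h1 := congrArg (fun x : ℤ × ℤ => ((x.1 : ℂ) + x.2 * omega) / 36) hkl
  have key : ∀ m, ∑ n, M (k, l) (m, n) * star (M (k', l') (m, n)) =
      (((if σ (k, l) m = σ (k', l') m then mulConj (F (k, l) m) (F (k', l') m) else 0).1 : ℂ) +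
      (if σ (k, l) m = σ (k', l') m then mulConj (F (k, l) m) (F (k', l') m) else 0).2 * omega)
        / 36 := by
    intro m
    simp only [hM, ite_mul, zero_mul, Finset.sum_ite_eq', Finset.mem_univ, if_true]
    split_ifs
    · exact toC_mul_star _ _
    · simp
  simp only [Matrix.mul_apply, Matrix.conjTranspose_apply, Fintype.sum_prod_type, key]
  rw [← Finset.sum_div, Finset.sum_add_distrib, ← Finset.sum_mul]
  simp only [Prod.fst_sum, Prod.snd_sum, Int.cast_sum] at h1
  rw [h1, Matrix.one_apply]
  simp only [Prod.mk.injEq]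
  split_ifs <;> simp

/-- There exists a multiunitary matrix of size 36: a matrix `U` over `Fin 6 × Fin 6`
such that `U`, its reshuffle, and its partial transpose are all unitary. -/
theorem exists_multiunitary_matrix_36 :
    ∃ U : Matrix (Fin 6 × Fin 6) (Fin 6 × Fin 6) ℂ,
      U * Uᴴ = 1 ∧
      reshuffle U * (reshuffle U)ᴴ = 1 ∧
      partialTranspose U * (partialTranspose U)ᴴ = 1 := by
  refine ⟨Matrix.of fun p q => if q.2 = q.1 - p.1 + p.2 then
    toC (arr (p.1 - p.2) (p.1 - q.1)) else 0, ?_, ?_, ?_⟩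
  · exact unitary_of_support (fun p m => m - p.1 + p.2) (fun p m => arr (p.1 - p.2) (p.1 - m))
      (by decide +kernel) _ fun _ _ _ => rfl
  · refine unitary_of_support (fun p m => m - p.1 + p.2) (fun p m => arr (p.1 - m) (p.1 - p.2))
      (by decide +kernel) _ fun p m n => ?_
    have e : n = p.2 - p.1 + m ↔ n = m - p.1 + p.2 := by
      rw [show p.2 - p.1 + m = m - p.1 + p.2 by abel]
    simp only [reshuffle, Matrix.of_apply, e]
  · refine unitary_of_support (fun p m => p.1 + p.2 - m) (fun p m => arr (m - p.2) (p.1 - m))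
      (by decide +kernel) _ fun p m n => ?_
    have e : p.2 = m - p.1 + n ↔ n = p.1 + p.2 - m := by
      constructor <;> intro h <;> rw [h] <;> abel
    simp only [partialTranspose, Matrix.of_apply, e]
    split_ifs with h
    · rw [h, show p.1 - (p.1 + p.2 - m) = m - p.2 by abel]
    · rfl
end

section
/- Let N ≥ 1 and let U : (Fin N × Fin N) → (Fin N × Fin N) → ℂ be any complex matrix, and define the four-index tensor ψ i j k l = (1/N) · U (i,j) (k,l), which is normalized whenever Σ |ψ|² = 1. Then the following are equivalent: (a) the three two-body reduced density matrices ρ₁₂, ρ₁₃, ρ₁₄ of ψ all equal (1/N²) times the identity matrix of size N²; (b) U, its reshuffle U^R, and its partial transpose U^Γ all satisfy M * Mᴴ = 1 (i.e., U is multiunitary). -/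
/-!
Each reduced density matrix is a Gram matrix: `ρ₁₂ = N⁻² U Uᴴ`, `ρ₁₃ = N⁻² U^R (U^R)ᴴ` and
`ρ₁₄ = N⁻² U^Γ (U^Γ)ᴴ`, because the rows of `U`, `U^R`, `U^Γ` are labelled by the retained
indices and the columns by the traced-out ones. As `N ≠ 0`, the scalar `N⁻²` cancels, so the
conditions match one by one.
-/

open Matrix

lemma eq_smul_one_iff {n : Type*} [DecidableEq n] {c : ℂ} (hc : c ≠ 0) {A B : Matrix n n ℂ}
    (h : ∀ p q, A p q = c * B p q) : A = c • (1 : Matrix n n ℂ) ↔ B = 1 := by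
  have hA : A = c • B := by
    ext p q
    simp [h]
  rw [hA]
  exact (smul_right_injective _ hc).eq_iff

/-- For a matrix `U` of size `N²` and the four-index tensor
`ψ i j k l = (1/N) · U (i,j) (k,l)`, the three two-body reduced density matrices
`ρ₁₂`, `ρ₁₃`, `ρ₁₄` of `ψ` all equal `(1/N²) • 1` iff `U`, its reshuffle `U^R`
and its partial transpose `U^Γ` are all unitary (i.e. `U` is multiunitary). -/
theorem reduced_maximally_mixed_iff_multiunitary (N : ℕ) (hN : 1 ≤ N)
    (U : Matrix (Fin N × Fin N) (Fin N × Fin N) ℂ)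
    (ψ : Fin N → Fin N → Fin N → Fin N → ℂ)
    (hψ : ∀ i j k l, ψ i j k l = ((N : ℂ))⁻¹ * U (i, j) (k, l)) :
    ((Matrix.of fun p q : Fin N × Fin N =>
        ∑ k, ∑ l, ψ p.1 p.2 k l * star (ψ q.1 q.2 k l)) =
          (((N : ℂ)) ^ 2)⁻¹ • (1 : Matrix (Fin N × Fin N) (Fin N × Fin N) ℂ) ∧
      (Matrix.of fun p q : Fin N × Fin N =>
        ∑ j, ∑ l, ψ p.1 j p.2 l * star (ψ q.1 j q.2 l)) =
          (((N : ℂ)) ^ 2)⁻¹ • (1 : Matrix (Fin N × Fin N) (Fin N × Fin N) ℂ) ∧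
      (Matrix.of fun p q : Fin N × Fin N =>
        ∑ j, ∑ k, ψ p.1 j k p.2 * star (ψ q.1 j k q.2)) =
          (((N : ℂ)) ^ 2)⁻¹ • (1 : Matrix (Fin N × Fin N) (Fin N × Fin N) ℂ)) ↔
    (U * Uᴴ = 1 ∧
      reshuffle U * (reshuffle U)ᴴ = 1 ∧
      partialTranspose U * (partialTranspose U)ᴴ = 1) := by
  have hN0 : ((N : ℂ) ^ 2)⁻¹ ≠ 0 := by
    have : N ≠ 0 := by omega
    simp [this]
  have key : ∀ a b : ℂ, (N : ℂ)⁻¹ * a * star ((N : ℂ)⁻¹ * b) = ((N : ℂ) ^ 2)⁻¹ * (a * star b) := by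
    intro a b
    simp only [star_mul', star_inv₀, star_natCast]
    ring
  refine and_congr ?_ (and_congr ?_ ?_)
  · refine eq_smul_one_iff hN0 fun p q => ?_
    simp only [Matrix.of_apply, hψ, key, ← Finset.mul_sum, Matrix.mul_apply,
      Matrix.conjTranspose_apply, Fintype.sum_prod_type]
  · refine eq_smul_one_iff hN0 fun p q => ?_
    simp only [Matrix.of_apply, hψ, key, ← Finset.mul_sum, Matrix.mul_apply,
      Matrix.conjTranspose_apply, Fintype.sum_prod_type, reshuffle]
  · refine eq_smul_one_iff hN0 fun p q => ?_
    simp only [Matrix.of_apply, hψ, key, ← Finset.mul_sum, Matrix.mul_apply,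
      Matrix.conjTranspose_apply, Fintype.sum_prod_type, partialTranspose]
    -- The column index of `U^Γ` is `(k, j)`, while the partial trace sums over `j` first.
    rw [Finset.sum_comm]
end

section
/- Let A and B be two orthogonal Latin squares of order N (N ≥ 1). Define the tensor ψ : Fin N → Fin N → Fin N → Fin N → ℂ by ψ i j k l = 1/N if k = A(i,j) and l = B(i,j), and ψ i j k l = 0 otherwise. Then for each pair of the four tensor factors, the corresponding two-body reduced density matrix of ψ equals (1/N²) times the identity matrix of size N²; in particular ρ₁₂ (i,j)(i',j') = Σ_{k,l} ψ i j k l · conj(ψ i' j' k l), ρ₁₃ (i,k)(i',k') = Σ_{j,l} ψ i j k l · conj(ψ i' j k' l), ρ₁₄ (i,l)(i',l') = Σ_{j,k} ψ i j k l · conj(ψ i' j k l'), and the analogously defined ρ₂₃, ρ₂₄, ρ₃₄ are all equal to (1/N²)·I. Hence ψ is an AME(4,N) state. -/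
/-!
The support of `ψ` is the set of quadruples `(i, j, A (i, j), B (i, j))`. The Latin square axioms
and orthogonality say that any two coordinates of such a quadruple determine the other two. So,
for each split of the four factors into two pairs, the support is the graph of a bijection `f`
between pairs, and the reduced density matrix has entries
`∑ r, N⁻¹ * [r = f p] * N⁻¹ * [r = f q] = N⁻² * [f p = f q] = N⁻² * [p = q]`.
`reduced_eq_of_graph` carries out this computation for an arbitrary support relation.
-/

open Matrix

/-- If a tensor is constantly `N⁻¹` on the graph `S` of an injective function from the retained
pair of indices to the traced-out pair, and `0` elsewhere, then its reduced density matrix is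
`N⁻² • 1`. The hypotheses `hex` and `hinj` say that `S` is such a graph. -/
theorem reduced_eq_of_graph {N : ℕ} (S : Fin N × Fin N → Fin N → Fin N → Prop)
    [∀ p a b, Decidable (S p a b)] (φ : Fin N × Fin N → Fin N → Fin N → ℂ)
    (hφ : ∀ p a b, φ p a b = if S p a b then (N : ℂ)⁻¹ else 0)
    (hex : ∀ p, ∃ a b, ∀ a' b', S p a' b' ↔ a' = a ∧ b' = b)
    (hinj : ∀ p q a b, S p a b → S q a b → p = q) :
    (Matrix.of fun p q : Fin N × Fin N => ∑ a, ∑ b, φ p a b * star (φ q a b)) =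
      ((N : ℂ) ^ 2)⁻¹ • (1 : Matrix (Fin N × Fin N) (Fin N × Fin N) ℂ) := by
  ext p q
  obtain ⟨a, b, hab⟩ := hex p
  have hS : S p a b := (hab a b).2 ⟨rfl, rfl⟩
  -- Only the term at `(a, b)`, the partner of `p`, contributes.
  have hsum : ∑ a', ∑ b', φ p a' b' * star (φ q a' b') = φ p a b * star (φ q a b) := by
    rw [Finset.sum_eq_single a, Finset.sum_eq_single b]
    · intro b' _ hb'
      simp [hφ p, hab, hb']
    · simp
    · intro a' _ ha'
      simp [hφ p, hab, ha']
    · simp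
  rw [Matrix.of_apply, hsum, hφ, hφ, if_pos hS, Matrix.smul_apply, Matrix.one_apply]
  by_cases hpq : p = q
  · subst hpq
    simp [hS, pow_two]
  · have hq : ¬ S q a b := fun h => hpq (hinj p q a b hS h)
    simp [hpq, hq]

/-- Two orthogonal Latin squares of order `N` yield an AME(4,N) state: the tensor
`ψ i j k l = 1/N` if `k = A(i,j)` and `l = B(i,j)` (and `0` otherwise) has all six
two-body reduced density matrices equal to `(1/N²) • 1`. -/
theorem orthogonal_latin_squares_give_AME (N : ℕ) (hN : 1 ≤ N)
    (A B : Fin N × Fin N → Fin N)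
    (hA1 : ∀ i, Function.Bijective fun j => A (i, j))
    (hA2 : ∀ j, Function.Bijective fun i => A (i, j))
    (hB1 : ∀ i, Function.Bijective fun j => B (i, j))
    (hB2 : ∀ j, Function.Bijective fun i => B (i, j))
    (horth : Function.Injective fun p => (A p, B p))
    (ψ : Fin N → Fin N → Fin N → Fin N → ℂ)
    (hψ : ∀ i j k l, ψ i j k l =
      if k = A (i, j) ∧ l = B (i, j) then ((N : ℂ))⁻¹ else 0) :
    -- ρ₁₂
    (Matrix.of fun p q : Fin N × Fin N =>
        ∑ k, ∑ l, ψ p.1 p.2 k l * star (ψ q.1 q.2 k l)) =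
      (((N : ℂ)) ^ 2)⁻¹ • (1 : Matrix (Fin N × Fin N) (Fin N × Fin N) ℂ) ∧
    -- ρ₁₃
    (Matrix.of fun p q : Fin N × Fin N =>
        ∑ j, ∑ l, ψ p.1 j p.2 l * star (ψ q.1 j q.2 l)) =
      (((N : ℂ)) ^ 2)⁻¹ • (1 : Matrix (Fin N × Fin N) (Fin N × Fin N) ℂ) ∧
    -- ρ₁₄
    (Matrix.of fun p q : Fin N × Fin N =>
        ∑ j, ∑ k, ψ p.1 j k p.2 * star (ψ q.1 j k q.2)) =
      (((N : ℂ)) ^ 2)⁻¹ • (1 : Matrix (Fin N × Fin N) (Fin N × Fin N) ℂ) ∧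
    -- ρ₂₃
    (Matrix.of fun p q : Fin N × Fin N =>
        ∑ i, ∑ l, ψ i p.1 p.2 l * star (ψ i q.1 q.2 l)) =
      (((N : ℂ)) ^ 2)⁻¹ • (1 : Matrix (Fin N × Fin N) (Fin N × Fin N) ℂ) ∧
    -- ρ₂₄
    (Matrix.of fun p q : Fin N × Fin N =>
        ∑ i, ∑ k, ψ i p.1 k p.2 * star (ψ i q.1 k q.2)) =
      (((N : ℂ)) ^ 2)⁻¹ • (1 : Matrix (Fin N × Fin N) (Fin N × Fin N) ℂ) ∧
    -- ρ₃₄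
    (Matrix.of fun p q : Fin N × Fin N =>
        ∑ i, ∑ j, ψ i j p.1 p.2 * star (ψ i j q.1 q.2)) =
      (((N : ℂ)) ^ 2)⁻¹ • (1 : Matrix (Fin N × Fin N) (Fin N × Fin N) ℂ) := by
  -- An injective self-map of a finite set is onto, so every pair of symbols occurs.
  have hsurj : Function.Surjective fun p => (A p, B p) := Finite.surjective_of_injective horth
  refine ⟨?_, ?_, ?_, ?_, ?_, ?_⟩
  · refine reduced_eq_of_graph (fun p a b => a = A (p.1, p.2) ∧ b = B (p.1, p.2))
      (fun p a b => ψ p.1 p.2 a b) (fun p a b => hψ p.1 p.2 a b) ?_ ?_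
    · exact fun p => ⟨A p, B p, fun a b => Iff.rfl⟩
    · rintro p q a b ⟨h1, h2⟩ ⟨h3, h4⟩
      exact horth (Prod.ext (h1.symm.trans h3) (h2.symm.trans h4))
  · refine reduced_eq_of_graph (fun p a b => p.2 = A (p.1, a) ∧ b = B (p.1, a))
      (fun p a b => ψ p.1 a p.2 b) (fun p a b => hψ p.1 a p.2 b) ?_ ?_
    · rintro ⟨i, s⟩
      obtain ⟨j, hj⟩ := (hA1 i).2 s
      have huniq : ∀ j', A (i, j') = s → j' = j :=
        fun j' h => (hA1 i).1 (h.trans hj.symm)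
      exact ⟨j, B (i, j), fun j' b => by grind⟩
    · rintro ⟨i, s⟩ ⟨i', s'⟩ j b h h'
      have hi : B (i, j) = B (i', j) → i = i' := fun e => (hB2 j).1 e
      grind
  · refine reduced_eq_of_graph (fun p a b => b = A (p.1, a) ∧ p.2 = B (p.1, a))
      (fun p a b => ψ p.1 a b p.2) (fun p a b => hψ p.1 a b p.2) ?_ ?_
    · rintro ⟨i, s⟩
      obtain ⟨j, hj⟩ := (hB1 i).2 s
      have huniq : ∀ j', B (i, j') = s → j' = j :=
        fun j' h => (hB1 i).1 (h.trans hj.symm)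
      exact ⟨j, A (i, j), fun j' b => by grind⟩
    · rintro ⟨i, s⟩ ⟨i', s'⟩ j b h h'
      have hi : A (i, j) = A (i', j) → i = i' := fun e => (hA2 j).1 e
      grind
  · refine reduced_eq_of_graph (fun p a b => p.2 = A (a, p.1) ∧ b = B (a, p.1))
      (fun p a b => ψ a p.1 p.2 b) (fun p a b => hψ a p.1 p.2 b) ?_ ?_
    · rintro ⟨i, s⟩
      obtain ⟨j, hj⟩ := (hA2 i).2 s
      have huniq : ∀ j', A (j', i) = s → j' = j :=
        fun j' h => (hA2 i).1 (h.trans hj.symm)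
      exact ⟨j, B (j, i), fun j' b => by grind⟩
    · rintro ⟨i, s⟩ ⟨i', s'⟩ j b h h'
      have hi : B (j, i) = B (j, i') → i = i' := fun e => (hB1 j).1 e
      grind
  · refine reduced_eq_of_graph (fun p a b => b = A (a, p.1) ∧ p.2 = B (a, p.1))
      (fun p a b => ψ a p.1 b p.2) (fun p a b => hψ a p.1 b p.2) ?_ ?_
    · rintro ⟨i, s⟩
      obtain ⟨j, hj⟩ := (hB2 i).2 s
      have huniq : ∀ j', B (j', i) = s → j' = j :=
        fun j' h => (hB2 i).1 (h.trans hj.symm)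
      exact ⟨j, A (j, i), fun j' b => by grind⟩
    · rintro ⟨i, s⟩ ⟨i', s'⟩ j b h h'
      have hi : A (j, i) = A (j, i') → i = i' := fun e => (hA1 j).1 e
      grind
  · refine reduced_eq_of_graph (fun p a b => p.1 = A (a, b) ∧ p.2 = B (a, b))
      (fun p a b => ψ a b p.1 p.2) (fun p a b => hψ a b p.1 p.2) ?_ ?_
    · rintro p
      obtain ⟨⟨i, j⟩, rfl⟩ := hsurj p
      refine ⟨i, j, fun i' j' => ⟨fun h => ?_, ?_⟩⟩
      · have h' := @horth (i, j) (i', j') (Prod.ext h.1 h.2)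
        exact ⟨(congrArg Prod.fst h').symm, (congrArg Prod.snd h').symm⟩
      · rintro ⟨rfl, rfl⟩
        exact ⟨rfl, rfl⟩
    · rintro p q a b ⟨h1, h2⟩ ⟨h3, h4⟩
      exact Prod.ext (h1.trans h3.symm) (h2.trans h4.symm)
end

section
/- Let d ≥ 2 and let μ be the Haar probability measure on the orthogonal group O(d) of real d×d matrices O with O * Oᵀ = 1 (a compact topological group). Then for all indices i₁, i₂, k₁, k₂, j₁, j₂, l₁, l₂ ∈ Fin d, the fourth moment ∫ O i₁ j₁ · O i₂ j₂ · O k₁ l₁ · O k₂ l₂ dμ(O) equals (1/(d(d−1)(d+2))) · [ (d+1)·( δ(i₁,i₂)δ(k₁,k₂)δ(j₁,j₂)δ(l₁,l₂) + δ(i₁,k₁)δ(i₂,k₂)δ(j₁,l₁)δ(j₂,l₂) + δ(i₁,k₂)δ(i₂,k₁)δ(j₁,l₂)δ(j₂,l₁) ) − δ(i₁,i₂)δ(k₁,k₂)δ(j₁,l₁)δ(j₂,l₂) − δ(i₁,i₂)δ(k₁,k₂)δ(j₁,l₂)δ(j₂,l₁) − δ(i₁,k₁)δ(i₂,k₂)δ(j₁,j₂)δ(l₁,l₂)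 − δ(i₁,k₁)δ(i₂,k₂)δ(j₁,l₂)δ(j₂,l₁) − δ(i₁,k₂)δ(i₂,k₁)δ(j₁,j₂)δ(l₁,l₂) − δ(i₁,k₂)δ(i₂,k₁)δ(j₁,l₁)δ(j₂,l₂) ], where δ(a,b) = 1 if a = b and 0 otherwise. -/
/-!
For fixed column indices `j₁ j₂ l₁ l₂`, the fourth moment is a tensor `T` in its row indices, and
left invariance of the Haar measure says that `T` is an `O(d)`-invariant 4-tensor. Every such
tensor is a combination `A δ(a,b)δ(c,e) + B δ(a,c)δ(b,e) + C δ(a,e)δ(b,c)`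
(`IsInvariantTensor.eq_pairings`): sign changes kill the entries in which some index occurs an odd
number of times, permutations make the entries `T a a c c`, `T a c a c`, `T a c c a` (`a ≠ c`)
constants `A`, `B`, `C`, and one rational reflection gives `T a a a a = A + B + C`.

The relation `Oᵀ * O = 1` computes the three contractions of `T` as products of Kronecker deltas in
the column indices. This is a linear system for `A`, `B`, `C` whose matrix has diagonal entries
`d ^ 2` and off-diagonal entries `d`; it is invertible for `d ≥ 2`, and solving it gives the
Weingarten coefficients.
-/

open Matrix MeasureTheory

/-- Kronecker delta on `Fin d`, valued in `ℝ`. -/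
def kdelta {d : ℕ} (a b : Fin d) : ℝ := if a = b then 1 else 0

/-- The orthogonal group `O(d)` carries the Borel σ-algebra of its subspace topology. -/
noncomputable instance (d : ℕ) : MeasurableSpace (Matrix.orthogonalGroup (Fin d) ℝ) :=
  borel _

instance (d : ℕ) : BorelSpace (Matrix.orthogonalGroup (Fin d) ℝ) := ⟨rfl⟩

/-! ### Invariant 4-tensors of the orthogonal group -/

/-- Invariance of a 4-tensor on `ℝ^d` under the simultaneous action of `O(d)` on all four slots. -/
def IsInvariantTensor {d : ℕ} (T : Fin d → Fin d → Fin d → Fin d → ℝ) : Prop :=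
  ∀ Q : Matrix (Fin d) (Fin d) ℝ, Q ∈ Matrix.orthogonalGroup (Fin d) ℝ →
    ∀ a b c e, T a b c e = ∑ p, ∑ q, ∑ r, ∑ s, Q a p * Q b q * Q c r * Q e s * T p q r s

lemma IsInvariantTensor.signedPerm {d : ℕ} {T : Fin d → Fin d → Fin d → Fin d → ℝ}
    (hT : IsInvariantTensor T) (σ : Equiv.Perm (Fin d)) (s : Fin d → ℝ)
    (hs : ∀ a, s a * s a = 1) (a b c e : Fin d) :
    T a b c e = s a * s b * s c * s e * T (σ a) (σ b) (σ c) (σ e) := by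
  have hQ : (Matrix.of fun a p => if p = σ a then s a else 0) ∈
      Matrix.orthogonalGroup (Fin d) ℝ := by
    rw [Matrix.mem_orthogonalGroup_iff]
    ext x y
    simp only [Matrix.mul_apply, Matrix.transpose_apply, Matrix.of_apply, ite_mul, zero_mul,
      Finset.sum_ite_eq', Finset.mem_univ, if_true, EmbeddingLike.apply_eq_iff_eq,
      Matrix.one_apply]
    by_cases h : x = y
    · simp [h, hs]
    · simp [h]
  rw [hT _ hQ a b c e]
  simp [ite_mul, mul_ite]

lemma IsInvariantTensor.perm {d : ℕ} {T : Fin d → Fin d → Fin d → Fin d → ℝ}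
    (hT : IsInvariantTensor T) (σ : Equiv.Perm (Fin d)) (a b c e : Fin d) :
    T a b c e = T (σ a) (σ b) (σ c) (σ e) := by
  simpa using hT.signedPerm σ (fun _ => 1) (by simp) a b c e

/-- Flipping the sign of the `x`-th coordinate. -/
lemma IsInvariantTensor.flip {d : ℕ} {T : Fin d → Fin d → Fin d → Fin d → ℝ}
    (hT : IsInvariantTensor T) (x a b c e : Fin d) :
    T a b c e = (if a = x then -1 else 1) * (if b = x then -1 else 1) *
      (if c = x then -1 else 1) * (if e = x then -1 else 1) * T a b c e := by
  simpa using hT.signedPerm 1 (fun y => if y = x then -1 else 1)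
    (by intro y; split_ifs <;> norm_num) a b c e

lemma exists_perm_pair {d : ℕ} {a c z o : Fin d} (hac : a ≠ c) (hzo : z ≠ o) :
    ∃ σ : Equiv.Perm (Fin d), σ a = z ∧ σ c = o := by
  have hne : Equiv.swap a z c ≠ z := by
    intro h
    have : c = a := (Equiv.swap a z).injective (by rw [h, Equiv.swap_apply_left])
    exact hac this.symm
  refine ⟨Equiv.swap (Equiv.swap a z c) o * Equiv.swap a z, ?_, ?_⟩
  · rw [Equiv.Perm.mul_apply, Equiv.swap_apply_left, Equiv.swap_apply_of_ne_of_ne hne.symm hzo]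
  · rw [Equiv.Perm.mul_apply, Equiv.swap_apply_left]

/-- The diagonal entry is forced by the entries with two distinct indices: a reflection mixing the
coordinates `a` and `b` does what no signed permutation can. -/
lemma IsInvariantTensor.diag {d : ℕ} {T : Fin d → Fin d → Fin d → Fin d → ℝ}
    (hT : IsInvariantTensor T) {a b : Fin d} (hab : a ≠ b) :
    T a a a a = T a a b b + T a b a b + T a b b a := by
  -- The reflection along `v = e_a - 2 e_b`, for which `|v|² = 5`; it maps `e_a` to
  -- `(3/5) e_a + (4/5) e_b`.
  let v : Fin d → ℝ := fun p => (if p = a then 1 else 0) - 2 * (if p = b then 1 else 0)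
  have hv : ∑ p, v p * v p = 5 := by
    simp only [v, sub_mul, mul_sub, Finset.sum_sub_distrib]
    simp [hab, hab.symm]
    norm_num
  let Q : Matrix (Fin d) (Fin d) ℝ :=
    Matrix.of fun x y => (if x = y then 1 else 0) - 2 / 5 * (v x * v y)
  have hQ : Q ∈ Matrix.orthogonalGroup (Fin d) ℝ := by
    rw [Matrix.mem_orthogonalGroup_iff]
    ext x y
    have h1 : ∀ p, Q x p * Q y p = (if x = p then (if y = p then 1 else 0) else 0)
        - (if x = p then 2 / 5 * (v y * v p) else 0)
        - (if y = p then 2 / 5 * (v x * v p) else 0)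
        + 4 / 25 * (v x * v y) * (v p * v p) := by
      intro p
      simp only [Q, Matrix.of_apply]
      split_ifs <;> ring
    simp only [Matrix.mul_apply, Matrix.transpose_apply, h1, Finset.sum_add_distrib,
      Finset.sum_sub_distrib, ← Finset.mul_sum, hv, Finset.sum_ite_eq, Finset.mem_univ, if_true,
      Matrix.one_apply]
    simp only [eq_comm (a := y) (b := x)]
    ring
  have hrow : ∀ p, Q a p = (if p = a then 3 / 5 else 0) + (if p = b then 4 / 5 else 0) := by
    intro p
    simp only [Q, v, Matrix.of_apply, if_neg hab, if_true]
    by_cases h1 : p = a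
    · subst h1; simp [hab]; norm_num
    · by_cases h2 : p = b
      · subst h2; simp [hab, hab.symm]; norm_num
      · simp [h1, h2, Ne.symm h1]
  have hbal : T b b a a = T a a b b ∧ T b a b a = T a b a b ∧ T b a a b = T a b b a ∧
      T b b b b = T a a a a := by
    refine ⟨?_, ?_, ?_, ?_⟩ <;> rw [hT.perm (Equiv.swap a b)] <;> simp
  obtain ⟨e1, e2, e3, e4⟩ := hbal
  have hodd : ∀ x y z w, T x y z w =
      (if x = a then -1 else 1) * (if y = a then -1 else 1) *
      (if z = a then -1 else 1) * (if w = a then -1 else 1) * T x y z w := hT.flip a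
  have o1 := hodd a b b b
  have o2 := hodd b a b b
  have o3 := hodd b b a b
  have o4 := hodd b b b a
  have o5 := hodd b a a a
  have o6 := hodd a b a a
  have o7 := hodd a a b a
  have o8 := hodd a a a b
  simp only [if_true, if_neg hab.symm] at o1 o2 o3 o4 o5 o6 o7 o8
  have h := hT Q hQ a a a a
  simp only [hrow, add_mul, mul_add, Finset.sum_add_distrib, ite_mul, mul_ite, zero_mul, mul_zero,
    Finset.sum_ite_eq', Finset.mem_univ, if_true] at h
  linarith

/-- Invariant 4-tensors are spanned by the three pairings of the slots. -/
lemma IsInvariantTensor.eq_pairings {d : ℕ} {T : Fin d → Fin d → Fin d → Fin d → ℝ}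
    (hT : IsInvariantTensor T) {z o : Fin d} (hzo : z ≠ o) (a b c e : Fin d) :
    T a b c e = T z z o o * (kdelta a b * kdelta c e) + T z o z o * (kdelta a c * kdelta b e)
      + T z o o z * (kdelta a e * kdelta b c) := by
  have hA : ∀ x y, x ≠ y → T x x y y = T z z o o ∧ T x y x y = T z o z o ∧
      T x y y x = T z o o z := by
    intro x y hxy
    obtain ⟨σ, h1, h2⟩ := exists_perm_pair hxy hzo
    refine ⟨?_, ?_, ?_⟩ <;> rw [hT.perm σ, h1, h2]
  have hD : ∀ x, T x x x x = T z z o o + T z o z o + T z o o z := by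
    intro x
    have : ∃ y, x ≠ y := by
      by_cases h : x = z
      · exact ⟨o, h ▸ hzo⟩
      · exact ⟨z, h⟩
    obtain ⟨y, hy⟩ := this
    rw [hT.diag hy, (hA x y hy).1, (hA x y hy).2.1, (hA x y hy).2.2]
  have fa := hT.flip a a b c e
  have fb := hT.flip b a b c e
  have fc := hT.flip c a b c e
  have fe := hT.flip e a b c e
  unfold kdelta
  by_cases hab : a = b
  · subst hab
    by_cases hce : c = e
    · subst hce
      by_cases hac : a = c
      · subst hac; simp [hD]
      · simp [hac, (hA a c hac).1]
    · by_cases hac : a = c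
      · subst hac; simp [hce] at fe ⊢; linarith
      · simp [hce, hac, Ne.symm hce] at fc ⊢; linarith
  · by_cases hac : a = c
    · subst hac
      by_cases hbe : b = e
      · subst hbe; simp [hab, Ne.symm hab, (hA a b hab).2.1]
      · simp [hab, Ne.symm hab, hbe, Ne.symm hbe] at fb ⊢; linarith
    · by_cases hae : a = e
      · subst hae
        by_cases hbc : b = c
        · subst hbc; simp [hab, (hA a b hab).2.2]
        · simp [hab, Ne.symm hab, hac, Ne.symm hac, hbc, Ne.symm hbc] at fb ⊢; linarith
      · simp [hab, Ne.symm hab, hac, Ne.symm hac, hae, Ne.symm hae] at fa ⊢; linarith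

/-! ### The moment tensor and its contractions -/

lemma continuous_entry {d : ℕ} (i j : Fin d) :
    Continuous fun O : Matrix.orthogonalGroup (Fin d) ℝ =>
      (O : Matrix (Fin d) (Fin d) ℝ) i j :=
  continuous_subtype_val.matrix_elem i j

lemma abs_entry_le_one {d : ℕ} (O : Matrix.orthogonalGroup (Fin d) ℝ) (i j : Fin d) :
    |(O : Matrix (Fin d) (Fin d) ℝ) i j| ≤ 1 :=
  entry_norm_bound_of_unitary (𝕜 := ℝ) O.2 i j

lemma sum_entries {d : ℕ} (O : Matrix.orthogonalGroup (Fin d) ℝ) (j l : Fin d) :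
    ∑ i, (O : Matrix (Fin d) (Fin d) ℝ) i j * (O : Matrix (Fin d) (Fin d) ℝ) i l =
      kdelta j l := by
  have h := congrFun (congrFun ((Matrix.mem_orthogonalGroup_iff' (Fin d) ℝ).1 O.2) j) l
  simpa [Matrix.mul_apply, Matrix.one_apply, kdelta] using h

lemma integrable_entries {d : ℕ} (μ : Measure (Matrix.orthogonalGroup (Fin d) ℝ))
    [IsProbabilityMeasure μ] (i₁ i₂ k₁ k₂ j₁ j₂ l₁ l₂ : Fin d) :
    Integrable (fun O : Matrix.orthogonalGroup (Fin d) ℝ =>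
      (O : Matrix (Fin d) (Fin d) ℝ) i₁ j₁ * (O : Matrix (Fin d) (Fin d) ℝ) i₂ j₂ *
        (O : Matrix (Fin d) (Fin d) ℝ) k₁ l₁ * (O : Matrix (Fin d) (Fin d) ℝ) k₂ l₂) μ := by
  have hc := ((((continuous_entry i₁ j₁).mul (continuous_entry i₂ j₂)).mul
    (continuous_entry k₁ l₁)).mul (continuous_entry k₂ l₂))
  refine Integrable.of_bound hc.measurable.aestronglyMeasurable 1 (ae_of_all _ fun O => ?_)
  simp only [norm_mul, Real.norm_eq_abs]
  have h := fun i j => abs_entry_le_one O i j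
  exact mul_le_one₀ (mul_le_one₀ (mul_le_one₀ (h _ _) (abs_nonneg _) (h _ _)) (abs_nonneg _)
    (h _ _)) (abs_nonneg _) (h _ _)

/-- The fourth moments of the entries of `O`, as a tensor in the row indices `i₁ i₂ k₁ k₂` for
fixed column indices. -/
noncomputable def momentTensor {d : ℕ} (μ : Measure (Matrix.orthogonalGroup (Fin d) ℝ))
    (j₁ j₂ l₁ l₂ i₁ i₂ k₁ k₂ : Fin d) : ℝ :=
  ∫ O : Matrix.orthogonalGroup (Fin d) ℝ,
    (O : Matrix (Fin d) (Fin d) ℝ) i₁ j₁ * (O : Matrix (Fin d) (Fin d) ℝ) i₂ j₂ *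
      (O : Matrix (Fin d) (Fin d) ℝ) k₁ l₁ * (O : Matrix (Fin d) (Fin d) ℝ) k₂ l₂ ∂μ

lemma momentTensor_invariant {d : ℕ} (μ : Measure (Matrix.orthogonalGroup (Fin d) ℝ))
    [IsProbabilityMeasure μ] [μ.IsMulLeftInvariant] (j₁ j₂ l₁ l₂ : Fin d) :
    IsInvariantTensor (momentTensor μ j₁ j₂ l₁ l₂) := by
  intro Q hQ a b c e
  have hint := fun p q r s => integrable_entries μ p q r s j₁ j₂ l₁ l₂
  have hsum : ∑ p, ∑ q, ∑ r, ∑ s,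
      Q a p * Q b q * Q c r * Q e s * momentTensor μ j₁ j₂ l₁ l₂ p q r s =
      ∫ O : Matrix.orthogonalGroup (Fin d) ℝ, ∑ p, ∑ q, ∑ r, ∑ s, Q a p * Q b q * Q c r * Q e s *
        ((O : Matrix (Fin d) (Fin d) ℝ) p j₁ * (O : Matrix (Fin d) (Fin d) ℝ) q j₂ *
        (O : Matrix (Fin d) (Fin d) ℝ) r l₁ * (O : Matrix (Fin d) (Fin d) ℝ) s l₂) ∂μ := by
    have h0 := fun p q r s => (hint p q r s).const_mul (Q a p * Q b q * Q c r * Q e s)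
    have h1 := fun p q r => integrable_finsetSum Finset.univ fun s _ => h0 p q r s
    have h2 := fun p q => integrable_finsetSum Finset.univ fun r _ => h1 p q r
    have h3 := fun p => integrable_finsetSum Finset.univ fun q _ => h2 p q
    rw [integral_finsetSum _ fun p _ => h3 p]
    refine Finset.sum_congr rfl fun p _ => ?_
    rw [integral_finsetSum _ fun q _ => h2 p q]
    refine Finset.sum_congr rfl fun q _ => ?_
    rw [integral_finsetSum _ fun r _ => h1 p q r]
    refine Finset.sum_congr rfl fun r _ => ?_
    rw [integral_finsetSum _ fun s _ => h0 p q r s]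
    refine Finset.sum_congr rfl fun s _ => ?_
    rw [integral_const_mul, momentTensor]
  rw [hsum, momentTensor,
    ← integral_mul_left_eq_self _ (⟨Q, hQ⟩ : Matrix.orthogonalGroup (Fin d) ℝ)]
  congr 1
  ext O
  simp only [Submonoid.coe_mul, Matrix.mul_apply]
  rw [Finset.sum_mul_sum, Finset.sum_mul, Finset.sum_mul]
  refine Finset.sum_congr rfl fun p _ => ?_
  rw [Finset.sum_mul, Finset.sum_mul]
  refine Finset.sum_congr rfl fun q _ => ?_
  rw [Finset.mul_sum Finset.univ (fun r => Q c r * (O : Matrix (Fin d) (Fin d) ℝ) r l₁),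
    Finset.sum_mul]
  refine Finset.sum_congr rfl fun r _ => ?_
  rw [Finset.mul_sum]
  refine Finset.sum_congr rfl fun s _ => ?_
  ring

/-- Contracting two pairs of row indices. The integrand is a separate argument `g`, so that the
four factors can be listed in any order and all three pairings are covered. -/
lemma integral_contraction {d : ℕ} (μ : Measure (Matrix.orthogonalGroup (Fin d) ℝ))
    [IsProbabilityMeasure μ] (j j' l l' : Fin d)
    (g : Fin d → Fin d → Matrix.orthogonalGroup (Fin d) ℝ → ℝ)
    (hg : ∀ i k, Integrable (g i k) μ)
    (hgO : ∀ i k O, g i k O = ((O : Matrix (Fin d) (Fin d) ℝ) i j *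
      (O : Matrix (Fin d) (Fin d) ℝ) i j') * ((O : Matrix (Fin d) (Fin d) ℝ) k l *
      (O : Matrix (Fin d) (Fin d) ℝ) k l')) :
    ∑ i, ∑ k, ∫ O, g i k O ∂μ = kdelta j j' * kdelta l l' := by
  have h : ∀ i, ∑ k, ∫ O, g i k O ∂μ = ∫ O, ∑ k, g i k O ∂μ := fun i =>
    (integral_finsetSum _ fun k _ => hg i k).symm
  simp_rw [h]
  rw [← integral_finsetSum _ fun i _ => integrable_finsetSum _ fun k _ => hg i k]
  simp_rw [hgO, ← Finset.mul_sum, ← Finset.sum_mul, sum_entries]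
  simp

/-- Fourth moments of the orthogonal group `O(d)` with respect to the Haar probability
measure: for all indices,
`∫ O_{i₁j₁} O_{i₂j₂} O_{k₁l₁} O_{k₂l₂} dμ` equals the explicit Weingarten combination of
Kronecker deltas. -/
theorem orthogonal_group_fourth_moment (d : ℕ) (hd : 2 ≤ d)
    (μ : Measure (Matrix.orthogonalGroup (Fin d) ℝ))
    [μ.IsHaarMeasure] [IsProbabilityMeasure μ]
    (i₁ i₂ k₁ k₂ j₁ j₂ l₁ l₂ : Fin d) :
    (∫ O : Matrix.orthogonalGroup (Fin d) ℝ,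
        (O : Matrix (Fin d) (Fin d) ℝ) i₁ j₁ * (O : Matrix (Fin d) (Fin d) ℝ) i₂ j₂ *
          (O : Matrix (Fin d) (Fin d) ℝ) k₁ l₁ * (O : Matrix (Fin d) (Fin d) ℝ) k₂ l₂ ∂μ) =
      (1 / ((d : ℝ) * ((d : ℝ) - 1) * ((d : ℝ) + 2))) *
        (((d : ℝ) + 1) *
            (kdelta i₁ i₂ * kdelta k₁ k₂ * kdelta j₁ j₂ * kdelta l₁ l₂ +
              kdelta i₁ k₁ * kdelta i₂ k₂ * kdelta j₁ l₁ * kdelta j₂ l₂ +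
              kdelta i₁ k₂ * kdelta i₂ k₁ * kdelta j₁ l₂ * kdelta j₂ l₁) -
          kdelta i₁ i₂ * kdelta k₁ k₂ * kdelta j₁ l₁ * kdelta j₂ l₂ -
          kdelta i₁ i₂ * kdelta k₁ k₂ * kdelta j₁ l₂ * kdelta j₂ l₁ -
          kdelta i₁ k₁ * kdelta i₂ k₂ * kdelta j₁ j₂ * kdelta l₁ l₂ -
          kdelta i₁ k₁ * kdelta i₂ k₂ * kdelta j₁ l₂ * kdelta j₂ l₁ -
          kdelta i₁ k₂ * kdelta i₂ k₁ * kdelta j₁ j₂ * kdelta l₁ l₂ -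
          kdelta i₁ k₂ * kdelta i₂ k₁ * kdelta j₁ l₁ * kdelta j₂ l₂) := by
  have hint := fun p q r s => integrable_entries μ p q r s j₁ j₂ l₁ l₂
  let z : Fin d := ⟨0, by omega⟩
  let o : Fin d := ⟨1, by omega⟩
  have hzo : z ≠ o := by simp [z, o]
  obtain ⟨A, B, C, hT⟩ : ∃ A B C : ℝ, ∀ a b c e, momentTensor μ j₁ j₂ l₁ l₂ a b c e =
      A * (kdelta a b * kdelta c e) + B * (kdelta a c * kdelta b e)
        + C * (kdelta a e * kdelta b c) :=
    ⟨_, _, _, (momentTensor_invariant μ j₁ j₂ l₁ l₂).eq_pairings hzo⟩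
  have c1 : ∑ i, ∑ k, momentTensor μ j₁ j₂ l₁ l₂ i i k k = kdelta j₁ j₂ * kdelta l₁ l₂ :=
    integral_contraction μ j₁ j₂ l₁ l₂ _ (fun i k => hint i i k k) fun i k O => by ring
  have c2 : ∑ i, ∑ k, momentTensor μ j₁ j₂ l₁ l₂ i k i k = kdelta j₁ l₁ * kdelta j₂ l₂ :=
    integral_contraction μ j₁ l₁ j₂ l₂ _ (fun i k => hint i k i k) fun i k O => by ring
  have c3 : ∑ i, ∑ k, momentTensor μ j₁ j₂ l₁ l₂ i k k i = kdelta j₁ l₂ * kdelta j₂ l₁ :=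
    integral_contraction μ j₁ l₂ j₂ l₁ _ (fun i k => hint i k k i) fun i k O => by ring
  change momentTensor μ j₁ j₂ l₁ l₂ i₁ i₂ k₁ k₂ = _
  rw [hT]
  simp only [hT] at c1 c2 c3
  have hd2 : (2 : ℝ) ≤ d := by exact_mod_cast hd
  have h0 : (d : ℝ) ≠ 0 := by linarith
  have h1 : (d : ℝ) - 1 ≠ 0 := by linarith
  have h2 : (d : ℝ) + 2 ≠ 0 := by linarith
  have e1 : (d : ℝ) ^ 2 * A + d * B + d * C = kdelta j₁ j₂ * kdelta l₁ l₂ := by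
    rw [← c1]
    simp [kdelta, Finset.sum_add_distrib, ← ite_and]
    ring
  have e2 : d * A + (d : ℝ) ^ 2 * B + d * C = kdelta j₁ l₁ * kdelta j₂ l₂ := by
    rw [← c2]
    simp [kdelta, Finset.sum_add_distrib]
    ring
  have e3 : d * A + d * B + (d : ℝ) ^ 2 * C = kdelta j₁ l₂ * kdelta j₂ l₁ := by
    rw [← c3]
    simp [kdelta, Finset.sum_add_distrib]
    ring
  rw [eq_comm, one_div, inv_mul_eq_iff_eq_mul₀ (mul_ne_zero (mul_ne_zero h0 h1) h2)]
  linear_combination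
    (-((d : ℝ) + 1) * (kdelta i₁ i₂ * kdelta k₁ k₂) + kdelta i₁ k₁ * kdelta i₂ k₂
      + kdelta i₁ k₂ * kdelta i₂ k₁) * e1
    + (-((d : ℝ) + 1) * (kdelta i₁ k₁ * kdelta i₂ k₂) + kdelta i₁ i₂ * kdelta k₁ k₂
      + kdelta i₁ k₂ * kdelta i₂ k₁) * e2
    + (-((d : ℝ) + 1) * (kdelta i₁ k₂ * kdelta i₂ k₁) + kdelta i₁ i₂ * kdelta k₁ k₂
      + kdelta i₁ k₁ * kdelta i₂ k₂) * e3
end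

section
/- Every SudoQ design of size 4×4 has cardinality 4, 6, 8 or 16: if v is a SudoQ design of size N² with N = 2, then the number of distinct complex lines ℂ·(v i j k l), as (i,j,k,l) ranges over (Fin 2)⁴, belongs to {4, 6, 8, 16}. -/
/-!
Shift the labels inside the blocks: `e i j k l = v i j (k + j) (l + i)`. The row and column
conditions then say that, for `k ≠ k'`, every `e i j k l` is orthogonal to every `e i j' k' l'`, and,
for `l ≠ l'`, every `e i j k l` is orthogonal to every `e i' j k' l'`. Equivalently there are four
planes `V, W, X, Y` in `ℂ⁴` such that each of `V, W` commutes with each of `X, Y`, and the blocks are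
the bases of common eigenlines of the pairs `(V, X)`, `(V, Y)`, `(W, X)`, `(W, Y)`.

If no line is repeated there are 16 lines. A line repeated in diagonally opposite blocks is an
eigenline of all four planes, so it also occurs in a neighbouring block (`Good.diag`). If two
neighbouring blocks share a line, say `V ∩ X = W ∩ X`, then either `V = W`, or `Y` commutes with `X`
(`Good.key`). In both cases the four blocks coincide in pairs as sets of lines (`Good.adjacent`), so
that all lines occur in two neighbouring blocks. These are two bases adapted to the same splitting of
`ℂ⁴` into two planes; in each plane their pairs of lines coincide or are disjoint, which gives
`2 + 2`, `2 + 4` or `4 + 4` lines (`Good.count`).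
-/

namespace SudoQ

/-! ### Lines and orthonormal bases -/

/-- Vectors in `ℂ⁴`. -/
abbrev Vec := Fin 2 × Fin 2 → ℂ

/-- The standard Hermitian inner product, conjugate-linear in the first argument. -/
noncomputable def ip (u w : Vec) : ℂ := ∑ x, star (u x) * w x

/-- The line spanned by a vector. -/
noncomputable abbrev line (u : Vec) : Submodule ℂ Vec := Submodule.span ℂ {u}

lemma ip_star (u w : Vec) : star (ip u w) = ip w u := by
  simp only [ip, star_sum, star_mul', star_star]
  exact Finset.sum_congr rfl fun _ _ => mul_comm _ _

lemma ip_symm {u w : Vec} (h : ip u w = 0) : ip w u = 0 := by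
  rw [← ip_star, h, star_zero]

lemma ip_smul (c : ℂ) (u w : Vec) : ip u (c • w) = c * ip u w := by
  simp only [ip, Finset.mul_sum, Pi.smul_apply, smul_eq_mul]
  exact Finset.sum_congr rfl fun _ _ => by ring

/-- An orthonormal family of four vectors is complete. -/
lemma expand {g : Fin 2 → Fin 2 → Vec}
    (hg : ∀ k l k' l', ip (g k l) (g k' l') = if (k, l) = (k', l') then 1 else 0) (w : Vec) :
    w = ∑ p : Fin 2 × Fin 2, ip (g p.1 p.2) w • g p.1 p.2 := by
  let M : Matrix (Fin 2 × Fin 2) (Fin 2 × Fin 2) ℂ := fun p x => star (g p.1 p.2 x)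
  let N : Matrix (Fin 2 × Fin 2) (Fin 2 × Fin 2) ℂ := fun x p => g p.1 p.2 x
  have hMN : M * N = 1 := by
    ext p q
    rw [Matrix.mul_apply, Matrix.one_apply]
    exact hg p.1 p.2 q.1 q.2
  have hNM : N * M = 1 := mul_eq_one_comm.mp hMN
  have h : N.mulVec (M.mulVec w) = w := by
    rw [Matrix.mulVec_mulVec, hNM, Matrix.one_mulVec]
  funext x
  conv_lhs => rw [← h]
  simp only [Matrix.mulVec, dotProduct, Finset.sum_apply, Pi.smul_apply, smul_eq_mul, ip, M, N]
  exact Finset.sum_congr rfl fun _ _ => mul_comm _ _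

lemma parseval {g : Fin 2 → Fin 2 → Vec}
    (hg : ∀ k l k' l', ip (g k l) (g k' l') = if (k, l) = (k', l') then 1 else 0) (u w : Vec) :
    ip u w = ∑ p : Fin 2 × Fin 2, ip u (g p.1 p.2) * ip (g p.1 p.2) w := by
  conv_lhs => rw [expand hg w]
  simp only [ip, Finset.sum_apply, Pi.smul_apply, smul_eq_mul]
  simp only [Finset.mul_sum]
  rw [Finset.sum_comm]
  refine Finset.sum_congr rfl fun p _ => ?_
  simp only [Finset.sum_mul, Finset.mul_sum]
  rw [Finset.sum_comm]
  exact Finset.sum_congr rfl fun _ _ => Finset.sum_congr rfl fun _ _ => by ring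

lemma sum_two {k κ : Fin 2} (h : κ ≠ k) (φ : Fin 2 → ℂ) : ∑ x, φ x = φ k + φ κ := by
  rw [Fin.sum_univ_two]
  fin_cases k <;> fin_cases κ <;> simp_all [add_comm]

lemma sum_four {k κ l m : Fin 2} (h : κ ≠ k) (h' : m ≠ l) (φ : Fin 2 → Fin 2 → ℂ) :
    ∑ p : Fin 2 × Fin 2, φ p.1 p.2 = φ k l + φ k m + (φ κ l + φ κ m) := by
  rw [Fintype.sum_prod_type, sum_two h, sum_two h', sum_two h']

lemma line_eq_smul {u w : Vec} (h : line u = line w) : ∃ c : ℂ, w = c • u := by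
  have : w ∈ line u := h ▸ Submodule.mem_span_singleton_self w
  obtain ⟨c, hc⟩ := Submodule.mem_span_singleton.mp this
  exact ⟨c, hc.symm⟩

lemma line_perp {u w x : Vec} (h : line u = line w) (hx : ip x u = 0) : ip x w = 0 := by
  obtain ⟨c, rfl⟩ := line_eq_smul h
  rw [ip_smul, hx, mul_zero]

lemma line_proj {u w : Vec} (h : line u = line w) (hu : ip u u = 1) (hw : ip w w = 1)
    (x y : Vec) : ip x w * ip w y = ip x u * ip u y := by
  obtain ⟨c, rfl⟩ := line_eq_smul h
  have hc : c * star c = 1 := by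
    rw [ip_smul, ← ip_star, ip_smul, star_mul', ip_star, hu] at hw
    simpa using hw
  rw [ip_smul, ← ip_star y, ip_smul, star_mul', ip_star]
  linear_combination (ip x u * ip u y) * hc

/-! ### Relabelled designs -/

/-- The set of lines of the block `(i, j)`. -/
def blockLines (e : Fin 2 → Fin 2 → Fin 2 → Fin 2 → Vec) (i j : Fin 2) :
    Set (Submodule ℂ Vec) := {L | ∃ k l, L = line (e i j k l)}

/-- The orthogonality pattern of a SudoQ design of size `4×4` after the relabelling
`e i j k l = v i j (k + j) (l + i)`. -/
structure Good (e : Fin 2 → Fin 2 → Fin 2 → Fin 2 → Vec) : Prop where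
  block : ∀ i j k l k' l', ip (e i j k l) (e i j k' l') = if (k, l) = (k', l') then 1 else 0
  row : ∀ i j j' k k' l l', k ≠ k' → ip (e i j k l) (e i j' k' l') = 0
  col : ∀ i i' j k k' l l', l ≠ l' → ip (e i j k l) (e i' j k' l') = 0

namespace Good

variable {e : Fin 2 → Fin 2 → Fin 2 → Fin 2 → Vec}

/-- Transposing a design exchanges rows and columns. -/
lemma transpose (h : Good e) : Good (fun i j k l => e j i l k) where
  block i j k l k' l' := by
    rw [h.block]
    simp only [Prod.mk.injEq, and_comm]
  row i j j' k k' l l' hk := h.col _ _ _ _ _ _ _ hk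
  col i i' j k k' l l' hl := h.row _ _ _ _ _ _ _ hl

lemma unit (h : Good e) (i j k l : Fin 2) : ip (e i j k l) (e i j k l) = 1 := by
  simp [h.block]

lemma parseval (h : Good e) (i j : Fin 2) {k κ l m : Fin 2} (hk : κ ≠ k) (hl : m ≠ l) (u w : Vec) :
    ip u w = ip u (e i j k l) * ip (e i j k l) w + ip u (e i j k m) * ip (e i j k m) w +
      (ip u (e i j κ l) * ip (e i j κ l) w + ip u (e i j κ m) * ip (e i j κ m) w) := by
  rw [SudoQ.parseval (h.block i j) u w]
  exact sum_four hk hl (fun k l => ip u (e i j k l) * ip (e i j k l) w)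

/-- A unit vector orthogonal to three vectors of a block spans the line of the fourth. -/
lemma line_eq (h : Good e) {i j k κ l m : Fin 2} (hk : κ ≠ k) (hl : m ≠ l) {w : Vec}
    (hw : ip w w = 1) (h1 : ip (e i j k m) w = 0) (h2 : ip (e i j κ l) w = 0)
    (h3 : ip (e i j κ m) w = 0) : line w = line (e i j k l) := by
  have hx : w = ip (e i j k l) w • e i j k l := by
    conv_lhs => rw [expand (h.block i j) w]
    funext x
    simp only [Finset.sum_apply, Pi.smul_apply, smul_eq_mul]
    rw [sum_four hk hl (fun k l => ip (e i j k l) w * e i j k l x), h1, h2, h3]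
    ring
  have hne : ip (e i j k l) w ≠ 0 := by
    intro h0
    rw [h0, zero_smul] at hx
    rw [hx] at hw
    simp [ip] at hw
  conv_lhs => rw [hx]
  exact Submodule.span_singleton_smul_eq (IsUnit.mk0 _ hne) _

lemma ne_of_perp {u w : Vec} (hu : ip u u = 1) (h : ip u w = 0) : line u ≠ line w := by
  intro hl
  have := line_perp hl.symm h
  rw [hu] at this
  exact one_ne_zero this

lemma block_inj (h : Good e) {i j k l k' l' : Fin 2} (hh : line (e i j k l) = line (e i j k' l')) :
    k = k' ∧ l = l' := by
  by_contra hne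
  refine ne_of_perp (h.unit i j k l) ?_ hh
  rw [h.block, if_neg]
  simpa using hne

lemma row_eq (h : Good e) {i j j' k l k' l' : Fin 2}
    (hh : line (e i j k l) = line (e i j' k' l')) : k = k' := by
  by_contra hne
  exact ne_of_perp (h.unit i j k l) (h.row _ _ _ _ _ _ _ hne) hh

lemma col_eq (h : Good e) {i i' j k l k' l' : Fin 2}
    (hh : line (e i j k l) = line (e i' j k' l')) : l = l' := by
  by_contra hne
  exact ne_of_perp (h.unit i j k l) (h.col _ _ _ _ _ _ _ hne) hh

/-- Inside a plane, if one line of two orthogonal pairs agrees then so does the other. -/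
lemma row_compl (h : Good e) {i j j' k l l₁ m m₁ : Fin 2} (hl : l₁ ≠ l) (hm : m₁ ≠ m)
    (hh : line (e i j k l) = line (e i j' k m)) : line (e i j k l₁) = line (e i j' k m₁) := by
  obtain ⟨κ, hκ⟩ : ∃ κ, κ ≠ k := exists_ne k
  refine h.line_eq hκ hm.symm (h.unit _ _ _ _) (ip_symm (line_perp hh ?_))
    (h.row _ _ _ _ _ _ _ hκ) (h.row _ _ _ _ _ _ _ hκ)
  rw [h.block, if_neg]
  simpa using hl

lemma row_blockLines (h : Good e) {i j j' : Fin 2}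
    (hh : ∀ k, ∃ l l', line (e i j k l) = line (e i j' k l')) :
    blockLines e i j = blockLines e i j' := by
  have key : ∀ j j', (∀ k, ∃ l l', line (e i j k l) = line (e i j' k l')) →
      blockLines e i j ⊆ blockLines e i j' := by
    rintro j j' hh L ⟨k, l, rfl⟩
    obtain ⟨m, m', hm⟩ := hh k
    by_cases hlm : l = m
    · subst hlm
      exact ⟨k, m', hm⟩
    · obtain ⟨m₁, hm₁⟩ := exists_ne m'
      exact ⟨k, m₁, h.row_compl hlm hm₁ hm⟩
  refine (key j j' hh).antisymm (key j' j fun k => ?_)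
  obtain ⟨l, l', hl⟩ := hh k
  exact ⟨l', l, hl.symm⟩

lemma col_compl (h : Good e) {i i' j k k₁ κ κ₁ l : Fin 2} (hk : k₁ ≠ k) (hκ : κ₁ ≠ κ)
    (hh : line (e i j k l) = line (e i' j κ l)) : line (e i j k₁ l) = line (e i' j κ₁ l) :=
  h.transpose.row_compl (i := j) (j := i) (j' := i') hk hκ hh

lemma col_blockLines (h : Good e) {i i' j : Fin 2}
    (hh : ∀ l, ∃ k k', line (e i j k l) = line (e i' j k' l)) :
    blockLines e i j = blockLines e i' j := by
  have := h.transpose.row_blockLines (i := j) (j := i) (j' := i') hh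
  ext L
  have h2 := Set.ext_iff.mp this L
  simp only [blockLines, Set.mem_ofPred_eq] at h2 ⊢
  rw [exists_comm, h2, exists_comm]

/-! ### Repeated lines -/

/-- A line shared by diagonally opposite blocks also lies in a neighbouring block. -/
lemma diag (h : Good e) {i i' j j' k l k' l' : Fin 2}
    (hh : line (e i j k l) = line (e i' j' k' l')) :
    line (e i j k l) = line (e i j' k l') := by
  obtain ⟨κ, hκ⟩ := exists_ne k
  obtain ⟨m, hm⟩ := exists_ne l'
  refine h.line_eq hκ hm (h.unit _ _ _ _) ?_ (h.row _ _ _ _ _ _ _ hκ) (h.row _ _ _ _ _ _ _ hκ)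
  exact line_perp hh.symm (h.col _ _ _ _ _ _ _ hm)

/-- The vectors of a row of one block and of the matching row of the neighbouring block span the
same plane: the two expressions for the projection onto it agree. -/
lemma plane (h : Good e) (i j j' : Fin 2) {k l m : Fin 2} (hl : m ≠ l) (u w : Vec) :
    ip u (e i j k l) * ip (e i j k l) w + ip u (e i j k m) * ip (e i j k m) w =
    ip u (e i j' k l) * ip (e i j' k l) w + ip u (e i j' k m) * ip (e i j' k m) w := by
  obtain ⟨κ, hκ⟩ := exists_ne k
  have e1 := h.parseval i j' hκ hl u (e i j k l)
  have e2 := h.parseval i j' hκ hl u (e i j k m)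
  have e3 := h.parseval i j hκ hl (e i j' k l) w
  have e4 := h.parseval i j hκ hl (e i j' k m) w
  simp only [h.row _ _ _ _ _ _ _ hκ, h.row _ _ _ _ _ _ _ hκ.symm, mul_zero, zero_mul,
    add_zero] at e1 e2 e3 e4
  rw [e1, e2, e3, e4]
  ring

/-- If the blocks `(i, j)` and `(i', j)` share a line but their rows through it span different
planes, then the blocks `(i, j)` and `(i, j')` consist of the same lines. -/
lemma key (h : Good e) {i i' j j' k k' l l₁ : Fin 2} (hl : l₁ ≠ l)
    (hh : line (e i j k l) = line (e i' j k' l))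
    (hne : line (e i' j k' l₁) ≠ line (e i j k l₁)) :
    blockLines e i j = blockLines e i j' := by
  obtain ⟨κ, hκ⟩ := exists_ne k
  -- The component `β` of `e i' j k' l₁` outside the plane spanned by row `k` is nonzero.
  have hβ : ip (e i j κ l₁) (e i' j k' l₁) ≠ 0 := fun h0 =>
    hne (h.line_eq hκ hl.symm (h.unit _ _ _ _) (h.col _ _ _ _ _ _ _ hl.symm) h0
      (h.col _ _ _ _ _ _ _ hl.symm))
  have hβ' : ip (e i' j k' l₁) (e i j κ l₁) ≠ 0 := fun h0 => hβ (ip_symm h0)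
  have hnorm := h.parseval i j hκ hl (e i' j k' l₁) (e i' j k' l₁)
  simp only [h.unit, h.col _ _ _ _ _ _ _ hl, zero_mul, zero_add] at hnorm
  -- The plane of row `k'` of the blocks `(i', ·)` commutes with the columns of `(i, j')`.
  have hcomm : ∀ r, ip (e i j' r 1) (e i' j k' l) * ip (e i' j k' l) (e i j' r 0) +
      ip (e i j' r 1) (e i' j k' l₁) * ip (e i' j k' l₁) (e i j' r 0) = 0 := by
    intro r
    rw [h.plane i' j j' hl]
    have : ∀ m, ip (e i j' r 1) (e i' j' k' m) * ip (e i' j' k' m) (e i j' r 0) = 0 := by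
      intro m
      by_cases hm : m = 0
      · subst hm
        rw [h.col _ _ _ _ _ _ _ (by decide), zero_mul]
      · rw [h.col _ _ _ _ _ _ _ hm, mul_zero]
    rw [this, this, add_zero]
  have hproj := fun r => line_proj hh (h.unit _ _ _ _) (h.unit _ _ _ _)
    (e i j' r 1) (e i j' r 0)
  have hrow : ∀ r r', r' ≠ r → ∀ m, ip (e i j' r m) (e i' j k' l₁) =
      ip (e i j' r m) (e i j r l₁) * ip (e i j r l₁) (e i' j k' l₁) := by
    intro r r' hr m
    have := h.parseval i j hr hl (e i j' r m) (e i' j k' l₁)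
    simpa only [h.row _ _ _ _ _ _ _ hr.symm, h.col _ _ _ _ _ _ _ hl.symm, mul_zero, zero_mul,
      add_zero, zero_add] using this
  have hrow' : ∀ r r', r' ≠ r → ∀ m, ip (e i' j k' l₁) (e i j' r m) =
      ip (e i' j k' l₁) (e i j r l₁) * ip (e i j r l₁) (e i j' r m) := by
    intro r r' hr m
    have := h.parseval i j hr hl (e i' j k' l₁) (e i j' r m)
    simpa only [h.row _ _ _ _ _ _ _ hr, h.col _ _ _ _ _ _ _ hl, mul_zero, zero_mul,
      add_zero, zero_add] using this
  -- In each row a vanishing product of coefficients makes the two orthogonal pairs agree.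
  have hfin : ∀ r s, ip (e i j' r 1) (e i j r s) * ip (e i j r s) (e i j' r 0) = 0 →
      ∃ l l', line (e i j r l) = line (e i j' r l') := by
    intro r s h0
    obtain ⟨r', hr⟩ := exists_ne r
    rcases mul_eq_zero.mp h0 with h0 | h0
    · exact ⟨s, 0, h.line_eq hr (by decide) (h.unit _ _ _ _) h0 (h.row _ _ _ _ _ _ _ hr)
        (h.row _ _ _ _ _ _ _ hr)⟩
    · exact ⟨s, 1, h.line_eq hr (by decide) (h.unit _ _ _ _) (ip_symm h0)
        (h.row _ _ _ _ _ _ _ hr) (h.row _ _ _ _ _ _ _ hr)⟩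
  refine h.row_blockLines fun r => ?_
  have hr := hcomm r
  by_cases hrk : r = k
  · subst hrk
    refine hfin r l ?_
    have horth := h.parseval i j hκ hl (e i j' r 1) (e i j' r 0)
    rw [h.block, if_neg (by simp)] at horth
    simp only [h.row _ _ _ _ _ _ _ hκ, h.row _ _ _ _ _ _ _ hκ.symm, mul_zero,
      add_zero] at horth
    rw [hproj, hrow r κ hκ, hrow' r κ hκ] at hr
    refine (mul_eq_zero.mp (?_ : _ * (ip (e i' j k' l₁) (e i j κ l₁) *
      ip (e i j κ l₁) (e i' j k' l₁)) = 0)).resolve_right (mul_ne_zero hβ' hβ)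
    linear_combination hr + (ip (e i' j k' l₁) (e i j r l₁) * ip (e i j r l₁) (e i' j k' l₁)) *
      horth - ip (e i j' r 1) (e i j r l) * ip (e i j r l) (e i j' r 0) * hnorm
  · obtain rfl : r = κ := by omega
    refine hfin r l₁ ?_
    rw [hproj, hrow r k hκ.symm, hrow' r k hκ.symm, h.row _ _ _ _ _ _ _ hκ, zero_mul,
      zero_add] at hr
    refine (mul_eq_zero.mp (?_ : _ * (ip (e i' j k' l₁) (e i j r l₁) *
      ip (e i j r l₁) (e i' j k' l₁)) = 0)).resolve_right (mul_ne_zero hβ' hβ)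
    linear_combination hr

/-- If a row of the block `(i, j)` agrees line by line with a row of `(i', j)`, then these rows span
the same plane, and for every `j'` the blocks `(i, j')` and `(i', j')` consist of the same lines. -/
lemma transfer (h : Good e) {i i' j k k' : Fin 2}
    (hh : ∀ l, line (e i j k l) = line (e i' j k' l)) (j' : Fin 2) :
    blockLines e i j' = blockLines e i' j' := by
  refine h.col_blockLines fun l => ⟨k, k', ?_⟩
  obtain ⟨κ, hκ⟩ := exists_ne k
  obtain ⟨κ', hκ'⟩ := exists_ne k'
  obtain ⟨m, hm⟩ := exists_ne l
  have hperp : ∀ m, ip (e i j' κ m) (e i' j' k' l) = 0 := by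
    intro m
    have h1 : ∀ s, ip (e i j' κ m) (e i' j k' s) = 0 := fun s =>
      line_perp (hh s) (h.row _ _ _ _ _ _ _ hκ)
    rw [h.parseval i' j hκ' hm (e i j' κ m) (e i' j' k' l), h1, h1, h.row _ _ _ _ _ _ _ hκ',
      h.row _ _ _ _ _ _ _ hκ']
    ring
  exact (h.line_eq hκ hm (h.unit _ _ _ _) (h.col _ _ _ _ _ _ _ hm) (hperp l) (hperp m)).symm

/-- If two vertically neighbouring blocks share a line, then the blocks coincide in pairs as sets of lines,
either along the columns or along the rows. -/
lemma adjacent (h : Good e) {i i' j k l k' l' : Fin 2} (hi : i' ≠ i)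
    (hh : line (e i j k l) = line (e i' j k' l')) :
    (∀ j i i', blockLines e i j = blockLines e i' j) ∨
      (∀ i j j', blockLines e i j = blockLines e i j') := by
  obtain rfl := h.col_eq hh
  obtain ⟨l₁, hl⟩ := exists_ne l
  by_cases hne : line (e i j k l₁) = line (e i' j k' l₁)
  · left
    have hall : ∀ s, line (e i j k s) = line (e i' j k' s) := by
      intro s
      by_cases hs : s = l
      · rw [hs, hh]
      · obtain rfl : s = l₁ := by omega
        exact hne
    have ht := h.transfer hall
    intro J I I'
    have h0 : ∀ I, blockLines e I J = blockLines e i J := by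
      intro I
      by_cases hI : I = i
      · rw [hI]
      · obtain rfl : I = i' := by omega
        exact (ht J).symm
    rw [h0 I, h0 I']
  · right
    have h0 : ∀ I J, blockLines e I j = blockLines e I J := by
      intro I J
      by_cases hI : I = i
      · subst hI
        exact h.key hl hh (Ne.symm hne)
      · obtain rfl : I = i' := by omega
        exact h.key hl hh.symm hne
    intro I J J'
    rw [← h0 I J, ← h0 I J']

lemma transpose_blockLines (i j : Fin 2) :
    blockLines (fun i j k l => e j i l k) i j = blockLines e j i := by
  ext L
  simp only [blockLines, Set.mem_ofPred_eq]
  rw [exists_comm]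

lemma dichotomy (h : Good e) {i i' j j' k k' l l' : Fin 2}
    (hh : line (e i j k l) = line (e i' j' k' l')) (hne : (i, j, k, l) ≠ (i', j', k', l')) :
    (∀ j i i', blockLines e i j = blockLines e i' j) ∨
      (∀ i j j', blockLines e i j = blockLines e i j') := by
  have hrow : ∀ {i j j' k l k' l'}, j' ≠ j → line (e i j k l) = line (e i j' k' l') →
      (∀ j i i', blockLines e i j = blockLines e i' j) ∨
      (∀ i j j', blockLines e i j = blockLines e i j') := by
    intro i j j' k l k' l' hj hh
    have := h.transpose.adjacent (i := j) (i' := j') (j := i) (k := l) (k' := l') hj hh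
    simp only [transpose_blockLines] at this
    exact this.symm
  by_cases hj : j' = j
  · subst hj
    by_cases hi : i' = i
    · subst hi
      obtain ⟨rfl, rfl⟩ := h.block_inj hh
      exact absurd rfl hne
    · exact h.adjacent hi hh
  · exact hrow hj (h.diag hh)

/-! ### Counting -/

/-- Two orthogonal pairs of lines in a plane have 2 or 4 lines in total. -/
lemma count_plane (h : Good e) (i k : Fin 2) :
    ({line (e i 0 k 0), line (e i 0 k 1)} ∪ {line (e i 1 k 0), line (e i 1 k 1)} :
      Set (Submodule ℂ Vec)).ncard ∈ ({2, 4} : Set ℕ) := by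
  have h01 : ∀ j, line (e i j k 0) ≠ line (e i j k 1) := fun j hh =>
    absurd (h.block_inj hh).2 (by decide)
  by_cases hm : ∃ l m, line (e i 0 k l) = line (e i 1 k m)
  · left
    have heq : ({line (e i 0 k 0), line (e i 0 k 1)} : Set (Submodule ℂ Vec)) =
        {line (e i 1 k 0), line (e i 1 k 1)} := by
      obtain ⟨l, m, hlm⟩ := hm
      have h2 : line (e i 0 k (1 - l)) = line (e i 1 k (1 - m)) :=
        h.row_compl (by omega) (by omega) hlm
      fin_cases l <;> fin_cases m <;> simp at hlm h2 <;> simp [hlm, h2, Set.pair_comm]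
    rw [heq, Set.union_self, Set.ncard_pair (h01 1)]
  · right
    push Not at hm
    rw [Set.ncard_union_eq, Set.ncard_pair (h01 0), Set.ncard_pair (h01 1)]
    · rfl
    · simp [Set.disjoint_left, hm]

lemma count (h : Good e) (hc : ∀ j i i', blockLines e i j = blockLines e i' j) :
    Set.ncard {L | ∃ i j k l, L = line (e i j k l)} ∈ ({4, 6, 8} : Set ℕ) := by
  let S : Fin 2 → Set (Submodule ℂ Vec) := fun k =>
    {line (e 0 0 k 0), line (e 0 0 k 1)} ∪ {line (e 0 1 k 0), line (e 0 1 k 1)}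
  have hS : {L | ∃ i j k l, L = line (e i j k l)} = S 0 ∪ S 1 := by
    have h1 : {L | ∃ i j k l, L = line (e i j k l)} = {L | ∃ j k l, L = line (e 0 j k l)} := by
      ext L
      constructor
      · rintro ⟨i, j, hL⟩
        have : L ∈ blockLines e i j := hL
        rw [hc j i 0] at this
        exact ⟨j, this⟩
      · rintro ⟨j, hL⟩
        exact ⟨0, j, hL⟩
    rw [h1]
    ext L
    simp only [Set.mem_ofPred_eq, Fin.exists_fin_two, S, Set.mem_union, Set.mem_insert_iff,
      Set.mem_singleton_iff]
    tauto
  have hd : Disjoint (S 0) (S 1) := by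
    have hmem : ∀ k L, L ∈ S k → ∃ j l, L = line (e 0 j k l) := by
      rintro k L ((rfl | rfl) | (rfl | rfl)) <;> exact ⟨_, _, rfl⟩
    rw [Set.disjoint_left]
    intro L h0 h1
    obtain ⟨j, l, rfl⟩ := hmem _ _ h0
    obtain ⟨j', l', hL⟩ := hmem _ _ h1
    exact absurd (h.row_eq hL) (by decide)
  have hfin : ∀ k, (S k).Finite := fun k => by simp [S]
  rw [hS, Set.ncard_union_eq hd (hfin 0) (hfin 1)]
  have h0 := h.count_plane 0 0
  have h1 := h.count_plane 0 1
  simp only [Set.mem_insert_iff, Set.mem_singleton_iff] at h0 h1 ⊢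
  simp only [S]
  omega

lemma main (h : Good e) :
    Set.ncard {L | ∃ i j k l, L = line (e i j k l)} ∈ ({4, 6, 8, 16} : Set ℕ) := by
  have hsub : ({4, 6, 8} : Set ℕ) ⊆ {4, 6, 8, 16} := by
    intro n hn
    simp only [Set.mem_insert_iff, Set.mem_singleton_iff] at hn ⊢
    tauto
  by_cases hc : ∀ j i i', blockLines e i j = blockLines e i' j
  · exact hsub (h.count hc)
  by_cases hr : ∀ i j j', blockLines e i j = blockLines e i j'
  · have := h.transpose.count fun j i i' => by
      simpa only [transpose_blockLines] using hr j i i'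
    refine hsub ?_
    convert this using 3
    ext L
    constructor
    · rintro ⟨i, j, k, l, hL⟩
      exact ⟨j, i, l, k, hL⟩
    · rintro ⟨i, j, k, l, hL⟩
      exact ⟨j, i, l, k, hL⟩
  · have hinj : Function.Injective
        (fun p : Fin 2 × Fin 2 × Fin 2 × Fin 2 => line (e p.1 p.2.1 p.2.2.1 p.2.2.2)) := by
      rintro ⟨i, j, k, l⟩ ⟨i', j', k', l'⟩ hp
      by_contra hne
      exact (h.dichotomy hp hne).elim hc hr
    have hrange : {L | ∃ i j k l, L = line (e i j k l)} = Set.range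
        (fun p : Fin 2 × Fin 2 × Fin 2 × Fin 2 => line (e p.1 p.2.1 p.2.2.1 p.2.2.2)) := by
      ext L
      simp only [Set.mem_ofPred_eq, Set.mem_range, Prod.exists, eq_comm]
    rw [hrange, Set.ncard_range_of_injective hinj]
    simp

end Good

end SudoQ

/-- Every SudoQ design of size `4×4` (i.e. `N = 2`) has cardinality 4, 6, 8 or 16:
the number of distinct complex lines spanned by its entries lies in `{4, 6, 8, 16}`. -/
theorem sudoq_4x4_cardinalities
    (v : Fin 2 → Fin 2 → Fin 2 → Fin 2 → (Fin 2 × Fin 2 → ℂ))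
    -- blocks: for each fixed (i,j), the vectors {v i j k l}_{k,l} are orthonormal
    (hblock : ∀ i j k l k' l',
      ∑ x : Fin 2 × Fin 2, star (v i j k l x) * v i j k' l' x =
        if (k, l) = (k', l') then 1 else 0)
    -- rows: for each fixed (i,k), the vectors {v i j k l}_{j,l} are orthonormal
    (hrow : ∀ i k j l j' l',
      ∑ x : Fin 2 × Fin 2, star (v i j k l x) * v i j' k l' x =
        if (j, l) = (j', l') then 1 else 0)
    -- columns: for each fixed (j,l), the vectors {v i j k l}_{i,k} are orthonormal
    (hcol : ∀ j l i k i' k',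
      ∑ x : Fin 2 × Fin 2, star (v i j k l x) * v i' j k' l x =
        if (i, k) = (i', k') then 1 else 0) :
    Set.ncard {L : Submodule ℂ (Fin 2 × Fin 2 → ℂ) |
        ∃ i j k l, L = Submodule.span ℂ {v i j k l}} ∈ ({4, 6, 8, 16} : Set ℕ) := by
  classical
  have hgood : SudoQ.Good (fun i j k l => v i j (k + j) (l + i)) := by
    refine ⟨fun i j k l k' l' => ?_, fun i j j' k k' l l' hk => ?_, fun i i' j k k' l l' hl => ?_⟩
    · refine (hblock i j _ _ _ _).trans ?_
      simp
    · by_cases hj : j = j'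
      · subst hj
        refine (hblock i j _ _ _ _).trans (if_neg ?_)
        simp [hk]
      · -- Here `k + j = k' + j'`, so both vectors lie in the same row of the design.
        have hkk : k' + j' = k + j := by omega
        simp only [hkk]
        refine (hrow i _ _ _ _ _).trans (if_neg ?_)
        simp [hj]
    · by_cases hi : i = i'
      · subst hi
        refine (hblock i j _ _ _ _).trans (if_neg ?_)
        simp [hl]
      · have hll : l' + i' = l + i := by omega
        simp only [hll]
        refine (hcol j _ _ _ _ _).trans (if_neg ?_)
        simp [hi]
  have := hgood.main
  convert this using 3
  ext L
  constructor
  · rintro ⟨i, j, k, l, hL⟩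
    exact ⟨i, j, k - j, l - i, by simpa using hL⟩
  · rintro ⟨i, j, k, l, hL⟩
    exact ⟨i, j, k + j, l + i, hL⟩
end

section
/- Let N ≥ 1 and let U₁,…,U_N and V₁,…,V_N be two families of unitary N×N complex matrices. For i, j, k, l ∈ Fin N define the vector v i j k l ∈ ℂ^{Fin N × Fin N} by (v i j k l)(a, b) = U_i (j+k) a · V_j (i+l) b, where j+k and i+l denote addition in Fin N (modulo N) and U_i (m) denotes the m-th row of U_i. Then v is a SudoQ design of size N²: for each fixed (i,j) the N² vectors {v i j k l}_{k,l} are orthonormal, for each fixed (i,k) the vectors {v i j k l}_{j,l} are orthonormal, and for each fixed (j,l) the vectors {v i j k l}_{i,k} are orthonormal (each family thus forming an orthonormal basis of ℂ^{N²}). -/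
/-!
The inner product of two design vectors factors over the two tensor legs as
`⟨U_i (j+k), U_i' (j'+k')⟩ · ⟨V_j (i+l), V_j' (i'+l')⟩` (`sum_sudoqVec`). Within a block, row or
column, at least one factor compares two rows of the same unitary matrix, so it is a Kronecker
delta (`sum_star_row_mul_row`), and cancellation in `Fin N` turns it into a delta on the design
indices. In a block both factors are of this kind. In a row the `U` factor forces `j = j'`, after
which the `V` factor compares rows of the same matrix; columns are symmetric, with the `V` factor
forcing `i = i'`.
-/

open Matrix

/-- The SudoQ design built from two families `U`, `V` of unitary matrices:
`(v i j k l)(a, b) = U_i (j+k) a · V_j (i+l) b` (index addition mod `N`,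
`U_i (m)` being the `m`-th row of `U_i`). -/
def sudoqVec {N : ℕ} (U V : Fin N → Matrix (Fin N) (Fin N) ℂ) (i j k l : Fin N) :
    Fin N × Fin N → ℂ :=
  fun x => U i (j + k) x.1 * V j (i + l) x.2

/-- The rows of a unitary matrix are orthonormal. -/
lemma sum_star_row_mul_row {N : ℕ} {A : Matrix (Fin N) (Fin N) ℂ} (hA : A * Aᴴ = 1)
    (m n : Fin N) : ∑ a, star (A m a) * A n a = if m = n then 1 else 0 := by
  have h := congrFun (congrFun hA n) m
  simp only [Matrix.mul_apply, Matrix.conjTranspose_apply, Matrix.one_apply] at h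
  simp only [mul_comm (star _), h, eq_comm]

lemma sum_sudoqVec {N : ℕ} (U V : Fin N → Matrix (Fin N) (Fin N) ℂ)
    (i j k l i' j' k' l' : Fin N) :
    ∑ x : Fin N × Fin N, star (sudoqVec U V i j k l x) * sudoqVec U V i' j' k' l' x =
      (∑ a, star (U i (j + k) a) * U i' (j' + k') a) *
        ∑ b, star (V j (i + l) b) * V j' (i' + l') b := by
  rw [Finset.sum_mul_sum, Fintype.sum_prod_type]
  refine Finset.sum_congr rfl fun a _ => Finset.sum_congr rfl fun b _ => ?_
  simp only [sudoqVec, star_mul']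
  ring

/-- Given two families `U₁,…,U_N` and `V₁,…,V_N` of unitary `N×N` matrices, the family
`(v i j k l)(a,b) = U_i (j+k) a · V_j (i+l) b` is a SudoQ design of size `N²`: blocks
(fixed `(i,j)`), rows (fixed `(i,k)`) and columns (fixed `(j,l)`) are all orthonormal
families of `N²` vectors, hence orthonormal bases of `ℂ^{N²}`. -/
theorem sudoq_from_unitary_families (N : ℕ) (hN : 1 ≤ N)
    (U V : Fin N → Matrix (Fin N) (Fin N) ℂ)
    (hU : ∀ i, U i * (U i)ᴴ = 1)
    (hV : ∀ j, V j * (V j)ᴴ = 1) :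
    (∀ i j k l k' l' : Fin N,
      ∑ x : Fin N × Fin N, star (sudoqVec U V i j k l x) * sudoqVec U V i j k' l' x =
        if (k, l) = (k', l') then 1 else 0) ∧
    (∀ i k j l j' l' : Fin N,
      ∑ x : Fin N × Fin N, star (sudoqVec U V i j k l x) * sudoqVec U V i j' k l' x =
        if (j, l) = (j', l') then 1 else 0) ∧
    (∀ j l i k i' k' : Fin N,
      ∑ x : Fin N × Fin N, star (sudoqVec U V i j k l x) * sudoqVec U V i' j k' l x =
        if (i, k) = (i', k') then 1 else 0) := by
  -- `Fin N` carries its cancellative additive group structure only for nonzero `N`.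
  have : NeZero N := ⟨by lia⟩
  refine ⟨fun i j k l k' l' => ?_, fun i k j l j' l' => ?_, fun j l i k i' k' => ?_⟩
  · rw [sum_sudoqVec, sum_star_row_mul_row (hU i), sum_star_row_mul_row (hV j)]
    simp only [add_right_inj, Prod.mk.injEq, ite_and, ite_mul, one_mul, zero_mul]
  · rw [sum_sudoqVec, sum_star_row_mul_row (hU i)]
    by_cases h : j = j'
    · subst h
      rw [sum_star_row_mul_row (hV j)]
      simp
    · simp [h]
  · rw [sum_sudoqVec, sum_star_row_mul_row (hV j)]
    by_cases h : i = i'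
    · subst h
      rw [sum_star_row_mul_row (hU i)]
      simp
    · simp [h]
end

section
/- Let N ≥ 1 and let U₁,…,U_N and V₁,…,V_N be two families of unitary N×N complex matrices, and let v be the SudoQ design defined by (v i j k l)(a, b) = U_i (j+k) a · V_j (i+l) b (addition modulo N, U_i (m) the m-th row of U_i). Let c_U be the number of distinct complex lines spanned by the N² rows {U_i (k) : i, k ∈ Fin N}, and c_V the analogous number for the V family. Then the cardinality of v — the number of distinct complex lines ℂ·(v i j k l) — equals c_U · c_V. -/
/-!
Every design vector is a pure tensor `u ⊗ v`, `(u ⊗ v)(a, b) = u a * v b`, of a row `u` of the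
`U` family and a row `v` of the `V` family. All rows of unitary matrices are nonzero, and for
nonzero vectors the line `ℂ·(u ⊗ v)` determines the lines `ℂ·u` and `ℂ·v`
(`span_eq_of_tensor_left`, `span_eq_of_tensor_right`): freezing one coordinate at which the other
factor does not vanish recovers each factor up to a scalar. Hence `(L, M) ↦ L ⊗ M`
(`tensorSpan`) is injective on pairs of row lines. Its image is exactly the set of lines of the
design: since `m ↦ j + m` and `m ↦ i + m` are bijections of `Fin N`, every pair of rows
`(U_i (m), V_j (n))` occurs, at `k = m - j` and `l = n - i`.
-/

open Matrix

/-- The pure tensor `u ⊗ v`, as a function on pairs of indices. -/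
def pureTensor {N : ℕ} (u v : Fin N → ℂ) : Fin N × Fin N → ℂ :=
  fun x => u x.1 * v x.2

/-- The tensor product `L ⊗ M` of two subspaces, realised inside `ℂ^{Fin N × Fin N}` as the span
of the pure tensors. -/
def tensorSpan {N : ℕ} (L M : Submodule ℂ (Fin N → ℂ)) : Submodule ℂ (Fin N × Fin N → ℂ) :=
  Submodule.span ℂ (Set.image2 pureTensor (L : Set (Fin N → ℂ)) (M : Set (Fin N → ℂ)))

lemma tensorSpan_span_singleton {N : ℕ} (u v : Fin N → ℂ) :
    tensorSpan (Submodule.span ℂ {u}) (Submodule.span ℂ {v}) =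
      Submodule.span ℂ {pureTensor u v} := by
  apply le_antisymm
  · refine Submodule.span_le.2 ?_
    rintro _ ⟨a, ha, b, hb, rfl⟩
    obtain ⟨s, rfl⟩ := Submodule.mem_span_singleton.1 ha
    obtain ⟨t, rfl⟩ := Submodule.mem_span_singleton.1 hb
    refine Submodule.mem_span_singleton.2 ⟨s * t, ?_⟩
    ext x
    simp only [pureTensor, Pi.smul_apply, smul_eq_mul]
    ring
  · refine Submodule.span_mono (Set.singleton_subset_iff.2 ?_)
    exact ⟨u, Submodule.mem_span_singleton_self u, v, Submodule.mem_span_singleton_self v, rfl⟩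

lemma span_le_of_smul_eq {N : ℕ} {u u' : Fin N → ℂ} {c d : ℂ} (hd : d ≠ 0)
    (h : ∀ a, c * u a = d * u' a) : Submodule.span ℂ {u'} ≤ Submodule.span ℂ {u} := by
  refine (Submodule.span_singleton_le_iff_mem _ _).2 (Submodule.mem_span_singleton.2 ⟨c / d, ?_⟩)
  ext a
  have := h a
  simp only [Pi.smul_apply, smul_eq_mul]
  field_simp
  exact this

lemma span_le_of_tensor_left {N : ℕ} {u v u' v' : Fin N → ℂ} (hv' : v' ≠ 0)
    (h : Submodule.span ℂ {pureTensor u v} = Submodule.span ℂ {pureTensor u' v'}) :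
    Submodule.span ℂ {u'} ≤ Submodule.span ℂ {u} := by
  obtain ⟨b, hb⟩ := Function.ne_iff.1 hv'
  obtain ⟨z, hz⟩ := Submodule.span_singleton_eq_span_singleton.1 h
  refine span_le_of_smul_eq (c := z * v b) (d := v' b) hb fun a => ?_
  have := congrFun hz (a, b)
  simp only [pureTensor, Pi.smul_apply, Units.smul_def, smul_eq_mul] at this
  linear_combination this

lemma span_le_of_tensor_right {N : ℕ} {u v u' v' : Fin N → ℂ} (hu' : u' ≠ 0)
    (h : Submodule.span ℂ {pureTensor u v} = Submodule.span ℂ {pureTensor u' v'}) :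
    Submodule.span ℂ {v'} ≤ Submodule.span ℂ {v} := by
  obtain ⟨a, ha⟩ := Function.ne_iff.1 hu'
  obtain ⟨z, hz⟩ := Submodule.span_singleton_eq_span_singleton.1 h
  refine span_le_of_smul_eq (c := z * u a) (d := u' a) ha fun b => ?_
  have := congrFun hz (a, b)
  simp only [pureTensor, Pi.smul_apply, Units.smul_def, smul_eq_mul] at this
  linear_combination this

lemma span_eq_of_tensor_left {N : ℕ} {u v u' v' : Fin N → ℂ} (hv : v ≠ 0) (hv' : v' ≠ 0)
    (h : Submodule.span ℂ {pureTensor u v} = Submodule.span ℂ {pureTensor u' v'}) :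
    Submodule.span ℂ {u} = Submodule.span ℂ {u'} :=
  le_antisymm (span_le_of_tensor_left hv h.symm) (span_le_of_tensor_left hv' h)

lemma span_eq_of_tensor_right {N : ℕ} {u v u' v' : Fin N → ℂ} (hu : u ≠ 0) (hu' : u' ≠ 0)
    (h : Submodule.span ℂ {pureTensor u v} = Submodule.span ℂ {pureTensor u' v'}) :
    Submodule.span ℂ {v} = Submodule.span ℂ {v'} :=
  le_antisymm (span_le_of_tensor_right hu h.symm) (span_le_of_tensor_right hu' h)

lemma unitary_row_ne_zero {N : ℕ} {A : Matrix (Fin N) (Fin N) ℂ} (hA : A * Aᴴ = 1) (k : Fin N) :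
    (A k : Fin N → ℂ) ≠ 0 := by
  intro h
  have h1 : (A * Aᴴ) k k = 1 := by rw [hA, Matrix.one_apply_eq]
  rw [Matrix.mul_apply, Finset.sum_eq_zero fun j _ => by rw [congrFun h j]; simp] at h1
  exact zero_ne_one h1

/-- The cardinality of the SudoQ design built from two unitary families equals the
product `c_U · c_V`, where `c_U` (resp. `c_V`) is the number of distinct complex lines
spanned by the rows of the `U` family (resp. the `V` family). -/
theorem sudoq_cardinality_eq_product (N : ℕ) (hN : 1 ≤ N)
    (U V : Fin N → Matrix (Fin N) (Fin N) ℂ)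
    (hU : ∀ i, U i * (U i)ᴴ = 1)
    (hV : ∀ j, V j * (V j)ᴴ = 1) :
    Set.ncard {L : Submodule ℂ (Fin N × Fin N → ℂ) |
        ∃ i j k l, L = Submodule.span ℂ {sudoqVec U V i j k l}} =
      Set.ncard {L : Submodule ℂ (Fin N → ℂ) |
          ∃ i k, L = Submodule.span ℂ {(U i k : Fin N → ℂ)}} *
        Set.ncard {L : Submodule ℂ (Fin N → ℂ) |
          ∃ j l, L = Submodule.span ℂ {(V j l : Fin N → ℂ)}} := by
  have : NeZero N := ⟨by omega⟩
  rw [← Set.ncard_prod]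
  have himage : {L : Submodule ℂ (Fin N × Fin N → ℂ) |
        ∃ i j k l, L = Submodule.span ℂ {sudoqVec U V i j k l}} =
      (fun p : Submodule ℂ (Fin N → ℂ) × Submodule ℂ (Fin N → ℂ) => tensorSpan p.1 p.2) ''
        ({L : Submodule ℂ (Fin N → ℂ) | ∃ i k, L = Submodule.span ℂ {(U i k : Fin N → ℂ)}} ×ˢ
          {L : Submodule ℂ (Fin N → ℂ) | ∃ j l, L = Submodule.span ℂ {(V j l : Fin N → ℂ)}}) := by
    ext L
    constructor
    · rintro ⟨i, j, k, l, rfl⟩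
      exact ⟨(Submodule.span ℂ {U i (j + k)}, Submodule.span ℂ {V j (i + l)}),
        ⟨⟨i, j + k, rfl⟩, ⟨j, i + l, rfl⟩⟩, tensorSpan_span_singleton _ _⟩
    · rintro ⟨⟨_, _⟩, ⟨⟨i, m, rfl⟩, ⟨j, n, rfl⟩⟩, rfl⟩
      refine ⟨i, j, m - j, n - i, ?_⟩
      have hvec : sudoqVec U V i j (m - j) (n - i) = pureTensor (U i m) (V j n) := by
        ext x
        simp only [sudoqVec, pureTensor, add_sub_cancel]
      rw [hvec]
      exact tensorSpan_span_singleton _ _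
  rw [himage]
  refine Set.InjOn.ncard_image ?_
  rintro ⟨_, _⟩ ⟨⟨i, m, rfl⟩, ⟨j, n, rfl⟩⟩ ⟨_, _⟩ ⟨⟨i', m', rfl⟩, ⟨j', n', rfl⟩⟩ h
  simp only [tensorSpan_span_singleton] at h
  exact Prod.ext
    (span_eq_of_tensor_left (unitary_row_ne_zero (hV j) n) (unitary_row_ne_zero (hV j') n') h)
    (span_eq_of_tensor_right (unitary_row_ne_zero (hU i) m) (unitary_row_ne_zero (hU i') m') h)
end

section
/- For every N ≥ 1 there exists a SudoQ design of size N² of maximal cardinality N⁴: a family of unit vectors v i j k l ∈ ℂ^{Fin N × Fin N} satisfying the SudoQ orthonormality conditions such that no two vectors v i j k l and v i' j' k' l' at distinct index quadruples are complex scalar multiples of each other (so the number of distinct complex lines spanned equals N⁴). -/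
/-!
The design consists of tensor products of plane waves. Let `ζ` be a primitive `N²`-th root of
unity and let `f_a` be the plane wave `x ↦ ζ ^ (a * x)` in `ℂ^N`. For `a ≡ b [MOD N]` the waves
`f_a` and `f_b` are orthogonal unless `a ≡ b [MOD N²]` (`waveInner_eq_zero`, a geometric sum), so the
frequencies `m * N + i`, with `m` running over the residues mod `N`, give for each `i < N` an
orthogonal basis of `ℂ^N`, and for `N ≥ 2` the `N²` waves obtained in this way are pairwise
non-proportional (compare the coordinates `0` and `1`).

Set `v i j k l = (1 / N) • f_a ⊗ f_b` with `a = (k + j) * N + i` and `b = (l + i) * N + j`.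
* Blocks: for fixed `i, j` this is a product basis.
* Rows: for fixed `i, k` the first factor separates different `j`; for equal `j` the second
  factor separates different `l`.
* Columns: for fixed `j, l` the second factor separates different `i`; for equal `i` the first
  factor separates different `k`.

The line of `v i j k l` determines both frequencies mod `N²`, hence `i` and `j` (their residues
mod `N`), hence `k` and `l`.
-/

namespace SudoQ

/-- The Hermitian inner product of the unnormalised plane waves `x ↦ ζ ^ (a * x)` and
`x ↦ ζ ^ (b * x)` in `ℂ^N`. -/
noncomputable def waveInner (N : ℕ) (ζ : ℂ) (a b : ℕ) : ℂ :=
  ∑ x : Fin N, star (ζ ^ (a * (x : ℕ))) * ζ ^ (b * (x : ℕ))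

/-- The normalised tensor product of the plane waves of frequencies `a` and `b`, a vector of `ℂ^N ⊗ ℂ^N`. -/
noncomputable def wave (N : ℕ) (ζ : ℂ) (a b : ℕ) (x : Fin N × Fin N) : ℂ :=
  (N : ℂ)⁻¹ * (ζ ^ (a * (x.1 : ℕ)) * ζ ^ (b * (x.2 : ℕ)))

lemma sum_star_wave_mul_wave (N : ℕ) (ζ : ℂ) (a b a' b' : ℕ) :
    ∑ x : Fin N × Fin N, star (wave N ζ a b x) * wave N ζ a' b' x =
      (N : ℂ)⁻¹ * (N : ℂ)⁻¹ * (waveInner N ζ a a' * waveInner N ζ b b') := by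
  rw [waveInner, waveInner, Finset.sum_mul_sum, Fintype.sum_prod_type, Finset.mul_sum]
  refine Finset.sum_congr rfl fun x _ => ?_
  rw [Finset.mul_sum]
  refine Finset.sum_congr rfl fun y _ => ?_
  simp only [wave, star_mul', star_inv₀, star_natCast]
  ring

variable {N : ℕ} {ζ : ℂ}

lemma pow_eq_pow_iff (hN : 1 ≤ N) (hζ : IsPrimitiveRoot ζ (N * N)) {a b : ℕ} :
    ζ ^ a = ζ ^ b ↔ a ≡ b [MOD N * N] := by
  have hpos : 0 < N * N := Nat.mul_pos hN hN
  have hmod (n : ℕ) : ζ ^ (n % (N * N)) = ζ ^ n := by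
    rw [hζ.eq_orderOf, pow_mod_orderOf]
  rw [← hmod a, ← hmod b]
  exact ⟨hζ.pow_inj (Nat.mod_lt a hpos) (Nat.mod_lt b hpos), fun h => congrArg (ζ ^ ·) h⟩

lemma waveInner_eq_sum_pow (hN : 1 ≤ N) (hζ : IsPrimitiveRoot ζ (N * N)) (a b : ℕ) :
    waveInner N ζ a b = ∑ x ∈ Finset.range N, ((ζ ^ a)⁻¹ * ζ ^ b) ^ x := by
  have hnorm : ‖ζ‖ = 1 := hζ.norm'_eq_one (Nat.mul_pos hN hN).ne'
  rw [waveInner, ← Fin.sum_univ_eq_sum_range (fun x => ((ζ ^ a)⁻¹ * ζ ^ b) ^ x)]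
  refine Finset.sum_congr rfl fun x _ => ?_
  have h : (ζ ^ (a * (x : ℕ)))⁻¹ = star (ζ ^ (a * (x : ℕ))) :=
    Complex.inv_eq_conj (by simp [hnorm])
  rw [← h, mul_pow, inv_pow, pow_mul, pow_mul]

lemma waveInner_self (hN : 1 ≤ N) (hζ : IsPrimitiveRoot ζ (N * N)) (a : ℕ) :
    waveInner N ζ a a = N := by
  have h0 : ζ ≠ 0 := hζ.ne_zero (Nat.mul_pos hN hN).ne'
  rw [waveInner_eq_sum_pow hN hζ, inv_mul_cancel₀ (pow_ne_zero a h0)]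
  simp

/-- The ratio `r = ζ ^ (b - a)` satisfies `r ^ N = 1` and `r ≠ 1`, so its geometric sum over
`0 ≤ x < N` vanishes. -/
lemma waveInner_eq_zero (hN : 1 ≤ N) (hζ : IsPrimitiveRoot ζ (N * N)) {a b : ℕ}
    (h : a ≡ b [MOD N]) (h' : ¬ a ≡ b [MOD N * N]) : waveInner N ζ a b = 0 := by
  have h0 : ζ ≠ 0 := hζ.ne_zero (Nat.mul_pos hN hN).ne'
  have ha : ζ ^ a ≠ 0 := pow_ne_zero a h0
  rw [waveInner_eq_sum_pow hN hζ]
  have hr : (ζ ^ a)⁻¹ * ζ ^ b ≠ 1 := fun hr =>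
    h' ((pow_eq_pow_iff hN hζ).1 ((inv_mul_eq_one₀ ha).1 hr))
  have hrN : ((ζ ^ a)⁻¹ * ζ ^ b) ^ N = 1 := by
    rw [mul_pow, inv_pow, inv_mul_eq_one₀ (pow_ne_zero N ha), ← pow_mul, ← pow_mul]
    exact (pow_eq_pow_iff hN hζ).2 (h.mul_right' N)
  rw [geom_sum_eq hr, hrN, sub_self, zero_div]

/-- A frequency `p * N + i` mod `N²` determines its base-`N` digit `i` and `p` mod `N`. -/
lemma freq_modEq (hN : 1 ≤ N) {p q i i' : ℕ} (hi : i < N) (hi' : i' < N)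
    (h : p * N + i ≡ q * N + i' [MOD N * N]) : i = i' ∧ p ≡ q [MOD N] := by
  have h1 : i = i' := by
    have h2 : (p * N + i) % N = (q * N + i') % N := h.of_mul_left N
    simpa [Nat.mod_eq_of_lt hi, Nat.mod_eq_of_lt hi'] using h2
  subst h1
  exact ⟨rfl, Nat.ModEq.mul_right_cancel' (by omega) (Nat.ModEq.add_right_cancel' i h)⟩

lemma waveInner_freq (hN : 1 ≤ N) (hζ : IsPrimitiveRoot ζ (N * N)) {p q i : ℕ} (hi : i < N)
    (h : ¬ p ≡ q [MOD N]) : waveInner N ζ (p * N + i) (q * N + i) = 0 := by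
  refine waveInner_eq_zero hN hζ ?_ fun h' => h (freq_modEq hN hi hi h').2
  simp [Nat.ModEq]

lemma fin_eq_of_add_left {a : ℕ} {k k' : Fin N} (h : a + k ≡ a + k' [MOD N]) : k = k' :=
  Fin.ext ((Nat.ModEq.add_left_cancel' a h).eq_of_lt_of_lt k.2 k'.2)

lemma fin_eq_of_add_right {a : ℕ} {k k' : Fin N} (h : k + a ≡ k' + a [MOD N]) : k = k' :=
  Fin.ext ((Nat.ModEq.add_right_cancel' a h).eq_of_lt_of_lt k.2 k'.2)

lemma sum_star_wave_self (hN : 1 ≤ N) (hζ : IsPrimitiveRoot ζ (N * N)) (a b : ℕ) :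
    ∑ x : Fin N × Fin N, star (wave N ζ a b x) * wave N ζ a b x = 1 := by
  have h : (N : ℂ) ≠ 0 := by exact_mod_cast (by omega : N ≠ 0)
  rw [sum_star_wave_mul_wave, waveInner_self hN hζ, waveInner_self hN hζ]
  field_simp

/-- Proportional waves have the same frequencies mod `N²`: the coordinate `(0, 0)` forces `c = 1`,
and the coordinates `(1, 0)` and `(0, 1)` then give the frequencies. -/
lemma freq_modEq_of_wave_eq_smul (hN : 2 ≤ N) (hζ : IsPrimitiveRoot ζ (N * N))
    {a b a' b' : ℕ} {c : ℂ} (h : wave N ζ a b = c • wave N ζ a' b') :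
    a ≡ a' [MOD N * N] ∧ b ≡ b' [MOD N * N] := by
  have hN0 : (N : ℂ) ≠ 0 := by exact_mod_cast (by omega : N ≠ 0)
  have h00 := congrFun h (⟨0, by omega⟩, ⟨0, by omega⟩)
  have h10 := congrFun h (⟨1, by omega⟩, ⟨0, by omega⟩)
  have h01 := congrFun h (⟨0, by omega⟩, ⟨1, by omega⟩)
  simp only [wave, Pi.smul_apply, smul_eq_mul, mul_zero, mul_one, pow_zero, one_mul]
    at h00 h10 h01
  have hc : c = 1 := (mul_right_cancel₀ (inv_ne_zero hN0) (by rw [one_mul]; exact h00)).symm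
  rw [hc, one_mul] at h10 h01
  exact ⟨(pow_eq_pow_iff (by omega) hζ).1 (mul_left_cancel₀ (inv_ne_zero hN0) h10),
    (pow_eq_pow_iff (by omega) hζ).1 (mul_left_cancel₀ (inv_ne_zero hN0) h01)⟩

end SudoQ

/-- For every `N ≥ 1` there exists a SudoQ design of size `N²` of maximal cardinality
`N⁴`: a family of vectors satisfying the SudoQ orthonormality conditions (blocks, rows
and columns all orthonormal) such that no two vectors at distinct index quadruples are
complex scalar multiples of each other. -/
theorem exists_sudoq_maximal_cardinality (N : ℕ) (hN : 1 ≤ N) :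
    ∃ v : Fin N → Fin N → Fin N → Fin N → (Fin N × Fin N → ℂ),
      -- blocks: for each fixed (i,j), the vectors {v i j k l}_{k,l} are orthonormal
      (∀ i j k l k' l' : Fin N,
        ∑ x : Fin N × Fin N, star (v i j k l x) * v i j k' l' x =
          if (k, l) = (k', l') then 1 else 0) ∧
      -- rows: for each fixed (i,k), the vectors {v i j k l}_{j,l} are orthonormal
      (∀ i k j l j' l' : Fin N,
        ∑ x : Fin N × Fin N, star (v i j k l x) * v i j' k l' x =
          if (j, l) = (j', l') then 1 else 0) ∧
      -- columns: for each fixed (j,l), the vectors {v i j k l}_{i,k} are orthonormal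
      (∀ j l i k i' k' : Fin N,
        ∑ x : Fin N × Fin N, star (v i j k l x) * v i' j k' l x =
          if (i, k) = (i', k') then 1 else 0) ∧
      -- maximal cardinality: no two entries at distinct index quadruples are
      -- complex scalar multiples of each other
      (∀ i j k l i' j' k' l' : Fin N, (i, j, k, l) ≠ (i', j', k', l') →
        ∀ c : ℂ, v i j k l ≠ c • v i' j' k' l') := by
  have hζ := Complex.isPrimitiveRoot_exp (N * N) (Nat.mul_pos hN hN).ne'
  set ζ := Complex.exp (2 * Real.pi * Complex.I / ((N * N : ℕ) : ℂ))
  refine ⟨fun i j k l => SudoQ.wave N ζ ((k + j) * N + i) ((l + i) * N + j), ?_, ?_, ?_, ?_⟩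
  · intro i j k l k' l'
    split_ifs with h
    · obtain ⟨rfl, rfl⟩ := Prod.mk.inj h
      exact SudoQ.sum_star_wave_self hN hζ _ _
    · rw [SudoQ.sum_star_wave_mul_wave]
      by_cases hk : k = k'
      · have hl : l ≠ l' := fun hl => h (by rw [hk, hl])
        rw [SudoQ.waveInner_freq (p := l + i) hN hζ j.2 (mt SudoQ.fin_eq_of_add_right hl),
          mul_zero, mul_zero]
      · rw [SudoQ.waveInner_freq (p := k + j) hN hζ i.2 (mt SudoQ.fin_eq_of_add_right hk),
          zero_mul, mul_zero]
  · intro i k j l j' l'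
    split_ifs with h
    · obtain ⟨rfl, rfl⟩ := Prod.mk.inj h
      exact SudoQ.sum_star_wave_self hN hζ _ _
    · rw [SudoQ.sum_star_wave_mul_wave]
      by_cases hj : j = j'
      · subst hj
        have hl : l ≠ l' := fun hl => h (by rw [hl])
        rw [SudoQ.waveInner_freq (p := l + i) hN hζ j.2 (mt SudoQ.fin_eq_of_add_right hl),
          mul_zero, mul_zero]
      · rw [SudoQ.waveInner_freq (p := k + j) hN hζ i.2 (mt SudoQ.fin_eq_of_add_left hj),
          zero_mul, mul_zero]
  · intro j l i k i' k'
    split_ifs with h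
    · obtain ⟨rfl, rfl⟩ := Prod.mk.inj h
      exact SudoQ.sum_star_wave_self hN hζ _ _
    · rw [SudoQ.sum_star_wave_mul_wave]
      by_cases hi : i = i'
      · subst hi
        have hk : k ≠ k' := fun hk => h (by rw [hk])
        rw [SudoQ.waveInner_freq (p := k + j) hN hζ i.2 (mt SudoQ.fin_eq_of_add_right hk),
          zero_mul, mul_zero]
      · rw [SudoQ.waveInner_freq (p := l + i) hN hζ j.2 (mt SudoQ.fin_eq_of_add_left hi),
          mul_zero, mul_zero]
  · intro i j k l i' j' k' l' hne c hc
    apply hne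
    rcases hN.eq_or_lt with rfl | hN2
    -- For `N = 1` there is only one index quadruple.
    · exact Subsingleton.elim _ _
    · obtain ⟨h1, h2⟩ := SudoQ.freq_modEq_of_wave_eq_smul hN2 hζ hc
      obtain ⟨hi, hk⟩ := SudoQ.freq_modEq hN i.2 i'.2 h1
      obtain ⟨hj, hl⟩ := SudoQ.freq_modEq hN j.2 j'.2 h2
      obtain rfl := Fin.ext hi
      obtain rfl := Fin.ext hj
      rw [SudoQ.fin_eq_of_add_right hk, SudoQ.fin_eq_of_add_right hl]
end

section
/- There are no genuinely quantum quantum Latin squares of dimensions 2 and 3: for N = 2 and N = 3, every quantum Latin square of size N has cardinality exactly N, i.e. the set of complex lines {ℂ·v(i,j) : i, j ∈ Fin N} has exactly N elements (so all entries lie, up to phase, in a single orthonormal basis). -/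
/-!
Fix the first row `v 0 ·`, an orthonormal basis. The coordinates of row `i ≠ 0` in this basis form
a unitary matrix, and its diagonal vanishes because `v i j` is orthogonal to `v 0 j` (they share
column `j`). In sizes 2 and 3, a unitary matrix with zero diagonal is monomial: distinct rows of a
3 × 3 matrix with zero diagonal overlap in a single column, so orthogonality becomes the vanishing
of a product of two entries, and the choice of one vanishing factor propagates around the three
pairs of rows (`monomial_three`). Hence every entry is a nonzero multiple of some `v 0 k`, and the
lines spanned by the entries are exactly the `N` distinct lines spanned by the first row
(`ncard_lines_eq`).
-/

open Matrix

lemma monomial_two (M : Matrix (Fin 2) (Fin 2) ℂ) (hd : ∀ j, M j j = 0) (j : Fin 2) :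
    ∃ k, ∀ l, l ≠ k → M j l = 0 := by
  refine ⟨j + 1, fun l hl => ?_⟩
  have : l = j := by revert j l; decide
  rw [this, hd]

lemma monomial_three (M : Matrix (Fin 3) (Fin 3) ℂ) (hM : M * Mᴴ = 1) (hd : ∀ j, M j j = 0)
    (j : Fin 3) : ∃ k, ∀ l, l ≠ k → M j l = 0 := by
  have h (a b : Fin 3) : ∑ x, M a x * star (M b x) = if a = b then 1 else 0 := by
    have := congrFun (congrFun hM a) b
    simpa [Matrix.mul_apply, Matrix.one_apply] using this
  have d0 := hd 0
  have d1 := hd 1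
  have d2 := hd 2
  have h01 : M 0 2 = 0 ∨ M 1 2 = 0 := by simpa [Fin.sum_univ_three, d0, d1] using h 0 1
  have h02 : M 0 1 = 0 ∨ M 2 1 = 0 := by simpa [Fin.sum_univ_three, d0, d2] using h 0 2
  have h12 : M 1 0 = 0 ∨ M 2 0 = 0 := by simpa [Fin.sum_univ_three, d1, d2] using h 1 2
  -- no row vanishes
  have n0 : ¬ (M 0 1 = 0 ∧ M 0 2 = 0) := fun ⟨p, q⟩ => by
    simpa [Fin.sum_univ_three, d0, p, q] using h 0 0
  have n1 : ¬ (M 1 0 = 0 ∧ M 1 2 = 0) := fun ⟨p, q⟩ => by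
    simpa [Fin.sum_univ_three, d1, p, q] using h 1 1
  have n2 : ¬ (M 2 0 = 0 ∧ M 2 1 = 0) := fun ⟨p, q⟩ => by
    simpa [Fin.sum_univ_three, d2, p, q] using h 2 2
  have key : (M 0 2 = 0 ∧ M 1 0 = 0 ∧ M 2 1 = 0) ∨ (M 0 1 = 0 ∧ M 1 2 = 0 ∧ M 2 0 = 0) := by
    tauto
  rcases key with ⟨p, q, r⟩ | ⟨p, q, r⟩
  · refine ⟨j + 1, fun l hl => ?_⟩
    fin_cases j <;> fin_cases l <;> simp_all
  · refine ⟨j + 2, fun l hl => ?_⟩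
    fin_cases j <;> fin_cases l <;> simp_all

/-- If every unitary matrix of size `N` with zero diagonal has at most one nonzero entry in each
row, then a quantum Latin square of size `N` has cardinality `N`. -/
lemma ncard_lines_eq (N : ℕ) [NeZero N]
    (hmono : ∀ M : Matrix (Fin N) (Fin N) ℂ, M * Mᴴ = 1 → (∀ j, M j j = 0) →
      ∀ j, ∃ k, ∀ l, l ≠ k → M j l = 0)
    (v : Fin N → Fin N → (Fin N → ℂ))
    (hrow : ∀ i j j' : Fin N,
      ∑ x : Fin N, star (v i j x) * v i j' x = if j = j' then 1 else 0)
    (hcol : ∀ j i i' : Fin N,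
      ∑ x : Fin N, star (v i j x) * v i' j x = if i = i' then 1 else 0) :
    Set.ncard {L : Submodule ℂ (Fin N → ℂ) |
        ∃ i j, L = Submodule.span ℂ {v i j}} = N := by
  have hU (i : Fin N) : Matrix.of (v i) * (Matrix.of (v i))ᴴ = 1 := by
    ext a b
    simp only [Matrix.mul_apply, Matrix.conjTranspose_apply, Matrix.of_apply, Matrix.one_apply]
    rw [← Finset.sum_congr rfl fun x _ => mul_comm (star (v i b x)) (v i a x), hrow]
    simp only [eq_comm]
  have hU' : (Matrix.of (v 0))ᴴ * Matrix.of (v 0) = 1 := mul_eq_one_comm.mp (hU 0)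
  have hne (i j : Fin N) : v i j ≠ 0 := fun h => by simpa [h] using hrow i j j
  -- every entry is a multiple of an entry of the first row
  have hmul (i j : Fin N) : ∃ k, ∃ c : ℂ, v i j = c • v 0 k := by
    by_cases hi : i = 0
    · exact ⟨j, 1, by simp [hi]⟩
    set M := Matrix.of (v i) * (Matrix.of (v 0))ᴴ with hM
    have hMu : M * Mᴴ = 1 := by
      rw [hM, Matrix.conjTranspose_mul, Matrix.conjTranspose_conjTranspose, Matrix.mul_assoc,
        ← Matrix.mul_assoc _ (Matrix.of (v 0)), hU', Matrix.one_mul, hU]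
    have hMd (j : Fin N) : M j j = 0 := by
      have := hcol j 0 i
      rw [if_neg (Ne.symm hi)] at this
      rw [← this, hM, Matrix.mul_apply]
      exact Finset.sum_congr rfl fun x _ => mul_comm _ _
    have hexp : M * Matrix.of (v 0) = Matrix.of (v i) := by
      rw [hM, Matrix.mul_assoc, hU', Matrix.mul_one]
    obtain ⟨k, hk⟩ := hmono M hMu hMd j
    refine ⟨k, M j k, funext fun x => ?_⟩
    have hx := congrFun (congrFun hexp j) x
    rw [Matrix.mul_apply, Finset.sum_eq_single k (fun l _ hl => by rw [hk l hl, zero_mul])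
      (by simp)] at hx
    exact hx.symm
  have hset : {L : Submodule ℂ (Fin N → ℂ) | ∃ i j, L = Submodule.span ℂ {v i j}} =
      Set.range fun k => Submodule.span ℂ {v 0 k} := by
    ext L
    constructor
    · rintro ⟨i, j, rfl⟩
      obtain ⟨k, c, hc⟩ := hmul i j
      have hc0 : c ≠ 0 := fun h => hne i j (by rw [hc, h, zero_smul])
      refine ⟨k, ?_⟩
      simp only [hc]
      exact (Submodule.span_singleton_smul_eq (IsUnit.mk0 c hc0) _).symm
    · rintro ⟨k, rfl⟩
      exact ⟨0, k, rfl⟩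
  have hinj : Function.Injective fun k => Submodule.span ℂ {v 0 k} := by
    intro a b hab
    by_contra hne'
    have hmem : v 0 b ∈ Submodule.span ℂ {v 0 a} := by
      rw [show Submodule.span ℂ {v 0 a} = Submodule.span ℂ {v 0 b} from hab]
      exact Submodule.mem_span_singleton_self _
    obtain ⟨c, hc⟩ := Submodule.mem_span_singleton.mp hmem
    -- pairing `v 0 b = c • v 0 a` with `v 0 a` gives `c = 0`
    have h0 := hrow 0 a b
    have h1 := hrow 0 a a
    rw [if_neg hne', ← hc] at h0
    rw [if_pos rfl] at h1
    have : c = 0 := by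
      simp only [Pi.smul_apply, smul_eq_mul, mul_left_comm _ c] at h0
      rwa [← Finset.mul_sum, h1, mul_one] at h0
    exact hne 0 b (by rw [← hc, this, zero_smul])
  rw [hset, ← Set.image_univ, Set.ncard_image_of_injective _ hinj, Set.ncard_univ, Nat.card_fin]

/-- There are no genuinely quantum quantum Latin squares of dimensions 2 and 3:
for `N = 2` or `N = 3`, every quantum Latin square of size `N` has cardinality exactly
`N`, i.e. the set of complex lines spanned by its entries has exactly `N` elements. -/
theorem no_genuinely_quantum_qls_dim_two_three (N : ℕ) (hN : N = 2 ∨ N = 3)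
    (v : Fin N → Fin N → (Fin N → ℂ))
    -- rows: for each fixed i, the vectors {v i j}_j are orthonormal
    (hrow : ∀ i j j' : Fin N,
      ∑ x : Fin N, star (v i j x) * v i j' x = if j = j' then 1 else 0)
    -- columns: for each fixed j, the vectors {v i j}_i are orthonormal
    (hcol : ∀ j i i' : Fin N,
      ∑ x : Fin N, star (v i j x) * v i' j x = if i = i' then 1 else 0) :
    Set.ncard {L : Submodule ℂ (Fin N → ℂ) |
        ∃ i j, L = Submodule.span ℂ {v i j}} = N := by
  rcases hN with rfl | rfl
  · exact ncard_lines_eq 2 (fun M _ => monomial_two M) v hrow hcol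
  · exact ncard_lines_eq 3 monomial_three v hrow hcol
end
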